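/- arXiv:1903.05011 — 15 statements merged into one kernel-verified Lean document; each statement's English description precedes it below -/
import Mathlib

section
/- Let R be a reduced, finite-type commutative ℂ-algebra, let ℓ ≥ 1, and let 𝒜 be a set of homogeneous polynomials of positive degree in the polynomial ring R[x₁,…,x_ℓ]. Assume that for every ℂ-algebra homomorphism φ : R[x₁,…,x_ℓ] → ℂ satisfying φ(f) = 0 for all f ∈ 𝒜, one has φ(xᵢ) = 0 for all i = 1,…,ℓ. Then R[x₁,…,x_ℓ] is a finitely generated module over the R-subalgebra R[𝒜] generated by 𝒜; in particular, R[𝒜] is a finitely generated R-algebra. -/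
open MvPolynomial

theorem aux_rad (R : Type) [CommRing R] [Algebra ℂ R]
    [Algebra.FiniteType ℂ R] (ℓ : ℕ)
    (𝒜 : Set (MvPolynomial (Fin ℓ) R))
    (hvan : ∀ φ : MvPolynomial (Fin ℓ) R →ₐ[ℂ] ℂ,
      (∀ f ∈ 𝒜, φ f = 0) → ∀ i : Fin ℓ, φ (X i) = 0) (i : Fin ℓ) :
    (X i : MvPolynomial (Fin ℓ) R) ∈ (Ideal.span 𝒜).radical := by
  have : Algebra.FiniteType ℂ (MvPolynomial (Fin ℓ) R) :=
    Algebra.FiniteType.trans (S := R) inferInstance inferInstance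
  have : IsJacobsonRing (MvPolynomial (Fin ℓ) R) := isJacobsonRing_of_finiteType (A := ℂ)
  rw [Ideal.radical_eq_jacobson, Ideal.jacobson, Ideal.mem_sInf]
  rintro m ⟨hm, hmax⟩
  letI : Field (MvPolynomial (Fin ℓ) R ⧸ m) := Ideal.Quotient.field m
  have : Algebra.FiniteType ℂ (MvPolynomial (Fin ℓ) R ⧸ m) :=
    Algebra.FiniteType.of_surjective (Ideal.Quotient.mkₐ ℂ m) (Ideal.Quotient.mkₐ_surjective ℂ m)
  have : Module.Finite ℂ (MvPolynomial (Fin ℓ) R ⧸ m) :=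
    finite_of_finite_type_of_isJacobsonRing ℂ _
  let ψ : (MvPolynomial (Fin ℓ) R ⧸ m) →ₐ[ℂ] ℂ := IsAlgClosed.lift
  have h := hvan (ψ.comp (Ideal.Quotient.mkₐ ℂ m)) (fun f hf => by
    have : (Ideal.Quotient.mk m f) = 0 :=
      Ideal.Quotient.eq_zero_iff_mem.2 (hm (Ideal.subset_span hf))
    simp [this]) i
  have h2 : ψ (Ideal.Quotient.mk m (X i)) = 0 := h
  rw [map_eq_zero_iff ψ ψ.toRingHom.injective] at h2
  exact Ideal.Quotient.eq_zero_iff_mem.1 h2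

theorem aux_comp (R : Type) [CommRing R] (ℓ : ℕ)
    (𝒜 : Set (MvPolynomial (Fin ℓ) R))
    (hhom : ∀ f ∈ 𝒜, ∃ n : ℕ, 0 < n ∧ f.IsHomogeneous n)
    (M : Submodule (Algebra.adjoin R 𝒜) (MvPolynomial (Fin ℓ) R)) (d : ℕ)
    (hM : ∀ e < d, ∀ p : MvPolynomial (Fin ℓ) R, p.IsHomogeneous e → p ∈ M)
    (p : MvPolynomial (Fin ℓ) R) (hp : p ∈ Ideal.span 𝒜) :
    ∀ a, homogeneousComponent d (a * p) ∈ M := by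
  induction hp using Submodule.span_induction with
  | zero => intro a; simp
  | add x y _ _ hx hy => intro a; rw [mul_add, map_add]; exact M.add_mem (hx a) (hy a)
  | smul b x _ hx => intro a; rw [smul_eq_mul, ← mul_assoc]; exact hx _
  | mem f hf =>
    intro a
    obtain ⟨n, hn, hfn⟩ := hhom f hf
    rw [← sum_homogeneousComponent a, Finset.sum_mul, map_sum]
    refine M.sum_mem fun i _ => ?_
    have hi := homogeneousComponent_isHomogeneous i a
    rw [homogeneousComponent_of_mem ((mem_homogeneousSubmodule _ _).2 (hi.mul hfn))]
    split_ifs with h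
    · have := M.smul_mem ⟨f, Algebra.subset_adjoin hf⟩ (hM i (by omega) _ hi)
      rw [mul_comm]
      exact this
    · exact M.zero_mem

theorem stmt_0 (R : Type) [CommRing R] [IsReduced R] [Algebra ℂ R]
    [Algebra.FiniteType ℂ R] (ℓ : ℕ) (hℓ : 1 ≤ ℓ)
    (𝒜 : Set (MvPolynomial (Fin ℓ) R))
    (hhom : ∀ f ∈ 𝒜, ∃ n : ℕ, 0 < n ∧ f.IsHomogeneous n)
    (hvan : ∀ φ : MvPolynomial (Fin ℓ) R →ₐ[ℂ] ℂ,
      (∀ f ∈ 𝒜, φ f = 0) → ∀ i : Fin ℓ, φ (X i) = 0) :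
    Module.Finite (Algebra.adjoin R 𝒜) (MvPolynomial (Fin ℓ) R) ∧
      Algebra.FiniteType R (Algebra.adjoin R 𝒜) := by
  have hfin : Module.Finite (Algebra.adjoin R 𝒜) (MvPolynomial (Fin ℓ) R) := by
    have hr := aux_rad R ℓ 𝒜 hvan
    choose N hN using hr
    let K := ∑ i, N i
    let T : Set (Fin ℓ →₀ ℕ) := {s | s.degree ≤ K}
    have hT : T.Finite := Finsupp.finite_of_degree_le K
    let M : Submodule (Algebra.adjoin R 𝒜) (MvPolynomial (Fin ℓ) R) :=
      Submodule.span _ ((fun s => monomial s (1 : R)) '' T)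
    have key : ∀ d, ∀ p : MvPolynomial (Fin ℓ) R, p.IsHomogeneous d → p ∈ M := by
      intro d
      induction d using Nat.strong_induction_on with
      | _ d ih =>
      intro p hp
      by_cases hd : d ≤ K
      · rw [p.as_sum]
        refine M.sum_mem fun s hs => ?_
        have hs1 : s.degree = d := by
          have := hp (mem_support_iff.1 hs)
          rw [Finsupp.degree_eq_weight_one]
          exact this
        have h1 : monomial s (1 : R) ∈ M := Submodule.subset_span ⟨s, by
          change s.degree ≤ K; omega, rfl⟩
        have h2 := M.smul_mem (algebraMap R (Algebra.adjoin R 𝒜) (coeff s p)) h1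
        rw [algebraMap_smul, smul_monomial, smul_eq_mul, mul_one] at h2
        exact h2
      · have hpI : p ∈ Ideal.span 𝒜 := by
          rw [p.as_sum]
          refine Ideal.sum_mem _ fun s hs => ?_
          have hs1 : s.degree = d := by
            have := hp (mem_support_iff.1 hs)
            rw [Finsupp.degree_eq_weight_one]
            exact this
          have : ∃ i, N i ≤ s i := by
            by_contra! hcon
            apply hd
            rw [← hs1, Finsupp.degree_eq_sum]
            exact Finset.sum_le_sum fun i _ => (hcon i).le
          obtain ⟨i, hi⟩ := this
          refine Ideal.mem_of_dvd _ ?_ (hN i)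
          rw [X_pow_eq_monomial, monomial_dvd_monomial]
          simp [hi]
        have := aux_comp R ℓ 𝒜 hhom M d ih p hpI 1
        rwa [one_mul, homogeneousComponent_of_mem ((mem_homogeneousSubmodule _ _).2 hp),
          if_pos rfl] at this
    refine ⟨?_⟩
    have htop : M = ⊤ := by
      rw [eq_top_iff]
      rintro p -
      rw [← sum_homogeneousComponent p]
      exact M.sum_mem fun i _ => key i _ (homogeneousComponent_isHomogeneous i p)
    rw [← htop]
    exact Submodule.fg_span (hT.image _)
  refine ⟨hfin, ?_⟩
  have : IsNoetherianRing R := Algebra.FiniteType.isNoetherianRing ℂ R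
  exact ⟨fg_of_fg_of_fg R (Algebra.adjoin R 𝒜) (MvPolynomial (Fin ℓ) R)
    (inferInstance : Algebra.FiniteType R (MvPolynomial (Fin ℓ) R)).out hfin.1
    Subtype.val_injective⟩
end

section
/- In the polynomial ring ℂ[y₁,…,y_k,x₁,…,x_k], define for n ≥ 1 the weighted power sum pₙ := y₁x₁ⁿ + ⋯ + y_k x_kⁿ and the weighted elementary symmetric polynomial eₙ := Σ_{i₁+⋯+i_k=n} C(y₁,i₁)⋯C(y_k,i_k)·x₁^{i₁}⋯x_k^{i_k}, where C(y,i) := y(y−1)⋯(y−i+1)/i! is the generalized binomial coefficient polynomial. Then for every N ≥ 1, the ℂ-subalgebra of ℂ[y₁,…,y_k,x₁,…,x_k] generated by {p₁,…,p_N} equals the ℂ-subalgebra generated by {e₁,…,e_N}. -/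
open MvPolynomial

/-- The generalized binomial coefficient polynomial `C(a, i) = a(a−1)⋯(a−i+1)/i!`,
evaluated at an element `a` of a commutative `ℂ`-algebra (here a polynomial ring);
by convention `C(a, 0) = 1`. -/
noncomputable def gbinom {σ : Type} (a : MvPolynomial σ ℂ) (i : ℕ) : MvPolynomial σ ℂ :=
  ((i.factorial : ℂ)⁻¹) • Polynomial.aeval a (descPochhammer ℂ i)

/-- The weighted power sum `pₙ = y₁x₁ⁿ + ⋯ + y_k x_kⁿ` in `ℂ[y₁,…,y_k,x₁,…,x_k]`,
where `y_j = X (Sum.inl j)` and `x_j = X (Sum.inr j)`. -/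
noncomputable def wPow (k : ℕ) (n : ℕ) : MvPolynomial (Fin k ⊕ Fin k) ℂ :=
  ∑ j : Fin k, X (Sum.inl j) * X (Sum.inr j) ^ n

/-- The weighted elementary symmetric polynomial
`eₙ = Σ_{i₁+⋯+i_k=n} C(y₁,i₁)⋯C(y_k,i_k)·x₁^{i₁}⋯x_k^{i_k}` in `ℂ[y₁,…,y_k,x₁,…,x_k]`. -/
noncomputable def wElem (k : ℕ) (n : ℕ) : MvPolynomial (Fin k ⊕ Fin k) ℂ :=
  ∑ t ∈ Finset.Nat.antidiagonalTuple k n,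
    ∏ j : Fin k, gbinom (X (Sum.inl j)) (t j) * X (Sum.inr j) ^ (t j)

lemma gbinom_succ {σ : Type} (a : MvPolynomial σ ℂ) (i : ℕ) :
    gbinom a (i + 1) * ((i : MvPolynomial σ ℂ) + 1) = (a - i) * gbinom a i := by
  unfold gbinom
  rw [descPochhammer_succ_right, Nat.factorial_succ]
  simp only [map_mul, map_sub, Polynomial.aeval_X, map_natCast]
  have h : ((i : MvPolynomial σ ℂ) + 1) = MvPolynomial.C ((i : ℂ) + 1) := by simp
  have h0 : ((i : ℂ) + 1) ≠ 0 := Nat.cast_add_one_ne_zero i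
  rw [h, MvPolynomial.smul_eq_C_mul, MvPolynomial.smul_eq_C_mul]
  have h2 : (((i + 1) * i.factorial : ℕ) : ℂ)⁻¹ * ((i : ℂ) + 1) = (i.factorial : ℂ)⁻¹ := by
    push_cast
    field_simp
  rw [← h2, MvPolynomial.C_mul]
  ring

/-- The generating series of one variable. -/
noncomputable def genSer (k : ℕ) (j : Fin k) : PowerSeries (MvPolynomial (Fin k ⊕ Fin k) ℂ) :=
  PowerSeries.mk fun i => gbinom (X (Sum.inl j)) i * X (Sum.inr j) ^ i

/-- Its logarithmic derivative. -/
noncomputable def logSer (k : ℕ) (j : Fin k) : PowerSeries (MvPolynomial (Fin k ⊕ Fin k) ℂ) :=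
  PowerSeries.mk fun i => (-1) ^ i * (X (Sum.inl j) * X (Sum.inr j) ^ (i + 1))

lemma logSer_mul (k : ℕ) (j : Fin k) :
    (1 + PowerSeries.X * PowerSeries.C (X (Sum.inr j))) * logSer k j
      = PowerSeries.C (X (Sum.inl j) * X (Sum.inr j)) := by
  ext1 n
  rw [add_mul, one_mul, mul_assoc, map_add]
  cases n with
  | zero => simp [logSer]
  | succ n =>
    rw [PowerSeries.coeff_succ_X_mul, PowerSeries.coeff_C_mul, PowerSeries.coeff_C]
    simp only [logSer, PowerSeries.coeff_mk, Nat.succ_ne_zero, if_false]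
    ring

lemma genSer_mul (k : ℕ) (j : Fin k) :
    (1 + PowerSeries.X * PowerSeries.C (X (Sum.inr j))) * PowerSeries.derivative _ (genSer k j)
      = PowerSeries.C (X (Sum.inl j) * X (Sum.inr j)) * genSer k j := by
  ext1 n
  rw [add_mul, one_mul, mul_assoc, map_add, PowerSeries.coeff_C_mul, PowerSeries.coeff_derivative]
  have key := gbinom_succ (X (Sum.inl j) : MvPolynomial (Fin k ⊕ Fin k) ℂ) n
  cases n with
  | zero =>
    simp only [genSer, PowerSeries.coeff_mk, PowerSeries.coeff_zero_X_mul]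
    simp only [Nat.cast_zero] at key ⊢
    linear_combination (X (Sum.inr j)) * key
  | succ n =>
    rw [PowerSeries.coeff_succ_X_mul, PowerSeries.coeff_C_mul, PowerSeries.coeff_derivative]
    simp only [genSer, PowerSeries.coeff_mk]
    push_cast at key ⊢
    linear_combination (X (Sum.inr j)) ^ (n + 2) * key

lemma derivative_genSer (k : ℕ) (j : Fin k) :
    PowerSeries.derivative _ (genSer k j) = logSer k j * genSer k j := by
  have h1 := logSer_mul k j
  have h2 := genSer_mul k j
  have hne : (1 + PowerSeries.X * PowerSeries.C (X (Sum.inr j)) :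
      PowerSeries (MvPolynomial (Fin k ⊕ Fin k) ℂ)) ≠ 0 := by
    intro h
    have := congrArg PowerSeries.constantCoeff h
    simp at this
  apply mul_left_cancel₀ hne
  rw [h2, ← h1, mul_assoc]

lemma derivative_prod_genSer (k : ℕ) (s : Finset (Fin k)) :
    PowerSeries.derivative _ (∏ j ∈ s, genSer k j)
      = (∑ j ∈ s, logSer k j) * ∏ j ∈ s, genSer k j := by
  induction s using Finset.induction_on with
  | empty => simp
  | insert a s ha ih =>
    rw [Finset.prod_insert ha, Finset.sum_insert ha, Derivation.leibniz, ih, derivative_genSer,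
      smul_eq_mul, smul_eq_mul]
    ring

lemma coeff_prod_genSer (k n : ℕ) :
    PowerSeries.coeff n (∏ j, genSer k j) = wElem k n := by
  rw [PowerSeries.coeff_prod, wElem]
  refine Finset.sum_bij' (fun l _ => (l : Fin k → ℕ)) (fun t _ => Finsupp.equivFunOnFinite.symm t)
    ?_ ?_ ?_ ?_ ?_
  · intro l hl
    simpa [Finset.Nat.mem_antidiagonalTuple] using hl
  · intro l hl
    simpa [Finset.Nat.mem_antidiagonalTuple] using hl
  · intro l _
    ext; simp
  · intro l _
    ext; simp
  · intro l _
    simp [genSer]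

lemma newton (k n : ℕ) :
    wElem k (n + 1) * ((n : MvPolynomial (Fin k ⊕ Fin k) ℂ) + 1)
      = ∑ ab ∈ Finset.HasAntidiagonal.antidiagonal n, (-1) ^ ab.1 * wPow k (ab.1 + 1) * wElem k ab.2 := by
  have h := congrArg (PowerSeries.coeff n) (derivative_prod_genSer k Finset.univ)
  rw [PowerSeries.coeff_derivative, coeff_prod_genSer, PowerSeries.coeff_mul] at h
  rw [h]
  refine Finset.sum_congr rfl fun ab _ => ?_
  rw [coeff_prod_genSer, map_sum, wPow, Finset.mul_sum]
  simp [logSer]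

lemma wElem_zero (k : ℕ) : wElem k 0 = 1 := by
  simp [wElem, gbinom, Finset.Nat.antidiagonalTuple_zero_right]

lemma wElem_mem (k N : ℕ) (S : Subalgebra ℂ (MvPolynomial (Fin k ⊕ Fin k) ℂ))
    (hS : ∀ n, 1 ≤ n → n ≤ N → wPow k n ∈ S) (n : ℕ) (hn : n ≤ N) : wElem k n ∈ S := by
  induction n using Nat.strong_induction_on with
  | _ n ih =>
  cases n with
  | zero => rw [wElem_zero]; exact S.one_mem
  | succ n =>
    have h0 : ((n : ℂ) + 1) ≠ 0 := Nat.cast_add_one_ne_zero n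
    have h : wElem k (n + 1) = ((n : ℂ) + 1)⁻¹ •
        (wElem k (n + 1) * ((n : MvPolynomial (Fin k ⊕ Fin k) ℂ) + 1)) := by
      have h1 : ((n : MvPolynomial (Fin k ⊕ Fin k) ℂ) + 1) = MvPolynomial.C ((n : ℂ) + 1) := by simp
      rw [h1, mul_comm, ← MvPolynomial.smul_eq_C_mul, smul_smul, inv_mul_cancel₀ h0, one_smul]
    rw [h, newton]
    refine S.smul_mem (S.sum_mem fun ab hab => ?_) _
    have := Finset.HasAntidiagonal.mem_antidiagonal.1 hab
    exact S.mul_mem (S.mul_mem (S.pow_mem (S.neg_mem S.one_mem) _) (hS _ (by omega) (by omega)))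
      (ih _ (by omega) (by omega))

lemma wPow_mem (k N : ℕ) (S : Subalgebra ℂ (MvPolynomial (Fin k ⊕ Fin k) ℂ))
    (hS : ∀ n, n ≤ N → wElem k n ∈ S) (n : ℕ) (hn1 : 1 ≤ n) (hn : n ≤ N) : wPow k n ∈ S := by
  induction n using Nat.strong_induction_on with
  | _ n ih =>
  obtain ⟨n, rfl⟩ : ∃ m, n = m + 1 := ⟨n - 1, by omega⟩
  have h := newton k n
  rw [Finset.Nat.sum_antidiagonal_eq_sum_range_succ
    (fun a b => (-1) ^ a * wPow k (a + 1) * wElem k b), Finset.sum_range_succ, Nat.sub_self,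
    wElem_zero, mul_one] at h
  have h2 : wPow k (n + 1) = (-1) ^ n * (wElem k (n + 1) * ((n : MvPolynomial (Fin k ⊕ Fin k) ℂ) + 1)
      - ∑ a ∈ Finset.range n, (-1) ^ a * wPow k (a + 1) * wElem k (n - a)) := by
    rw [h, add_sub_cancel_left, ← mul_assoc, ← mul_pow]
    simp
  have hneg : ∀ m : ℕ, (-1 : MvPolynomial (Fin k ⊕ Fin k) ℂ) ^ m ∈ S :=
    fun m => S.pow_mem (S.neg_mem S.one_mem) _
  rw [h2]
  refine S.mul_mem (hneg _) (S.sub_mem (S.mul_mem (hS _ hn)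
    (S.add_mem (natCast_mem S n) S.one_mem)) (S.sum_mem fun a ha => ?_))
  have := Finset.mem_range.1 ha
  exact S.mul_mem (S.mul_mem (hneg _) (ih _ (by omega) (by omega) (by omega))) (hS _ (by omega))

/-- For every `N ≥ 1`, the `ℂ`-subalgebra of `ℂ[y₁,…,y_k,x₁,…,x_k]`
generated by `p₁,…,p_N` equals the one generated by `e₁,…,e_N`. -/
theorem stmt_1 (k N : ℕ) (hN : 1 ≤ N) :
    Algebra.adjoin ℂ (wPow k '' Set.Icc 1 N) = Algebra.adjoin ℂ (wElem k '' Set.Icc 1 N) := by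
  apply le_antisymm
  · apply Algebra.adjoin_le
    rintro _ ⟨n, hn, rfl⟩
    refine wPow_mem k N _ (fun m hm => ?_) n hn.1 hn.2
    rcases Nat.eq_zero_or_pos m with rfl | h
    · rw [wElem_zero]; exact Subalgebra.one_mem _
    · exact Algebra.subset_adjoin ⟨m, ⟨h, hm⟩, rfl⟩
  · apply Algebra.adjoin_le
    rintro _ ⟨n, hn, rfl⟩
    refine wElem_mem k N _ (fun m h hm => ?_) n hn.2
    exact Algebra.subset_adjoin ⟨m, ⟨h, hm⟩, rfl⟩
end

section
/- Let m̄₁,…,m̄_k be vectors in ℂ^r such that for every nonempty subset S ⊆ {1,…,k} the sum Σ_{i∈S} m̄ᵢ is not the zero vector, and let v₁,…,v_k ∈ ℂ. If for every integer ℓ ≥ 1 one has v₁^ℓ·m̄₁ + v₂^ℓ·m̄₂ + ⋯ + v_k^ℓ·m̄_k = 0 in ℂ^r, then v₁ = v₂ = ⋯ = v_k = 0. -/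
/-- Let `m̄₁,…,m̄_k ∈ ℂ^r` be such that no nonempty subset of them sums to
zero, and let `v₁,…,v_k ∈ ℂ`.  If `v₁^ℓ·m̄₁ + ⋯ + v_k^ℓ·m̄_k = 0` for every integer `ℓ ≥ 1`,
then all the `vᵢ` vanish. -/
theorem stmt_2 (k r : ℕ) (m : Fin k → Fin r → ℂ)
    (hm : ∀ S : Finset (Fin k), S.Nonempty → ∑ i ∈ S, m i ≠ 0)
    (v : Fin k → ℂ)
    (hv : ∀ l : ℕ, 1 ≤ l → ∑ i : Fin k, v i ^ l • m i = 0) :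
    ∀ i : Fin k, v i = 0 := by
  classical
  have key : ∀ p : Polynomial ℂ, ∑ i : Fin k, (v i * p.eval (v i)) • m i = 0 := by
    intro p
    induction p using Polynomial.induction_on' with
    | add p q hp hq =>
      simp only [Polynomial.eval_add, mul_add, add_smul, Finset.sum_add_distrib, hp, hq, add_zero]
    | monomial n a =>
      have h := congrArg (fun x => a • x) (hv (n + 1) (by omega))
      simp only [Finset.smul_sum, smul_zero, smul_smul] at h
      rw [← h]
      refine Finset.sum_congr rfl fun i _ => ?_
      rw [Polynomial.eval_monomial]
      congr 1
      ring
  intro j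
  by_contra hj
  set p : Polynomial ℂ :=
    ∏ w ∈ (Finset.univ.image v).erase (v j), (Polynomial.X - Polynomial.C w) with hp
  have hpj : p.eval (v j) ≠ 0 := by
    rw [hp, Polynomial.eval_prod, Finset.prod_ne_zero_iff]
    intro w hw
    have := (Finset.mem_erase.mp hw).1
    simpa [sub_eq_zero] using this.symm
  have hpi : ∀ i, v i ≠ v j → p.eval (v i) = 0 := by
    intro i hi
    rw [hp, Polynomial.eval_prod]
    exact Finset.prod_eq_zero (i := v i)
      (Finset.mem_erase.mpr ⟨hi, Finset.mem_image_of_mem v (Finset.mem_univ i)⟩) (by simp)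
  apply hm (Finset.univ.filter fun i => v i = v j) ⟨j, by simp⟩
  have h := key p
  have h2 : ∑ i : Fin k, (v i * p.eval (v i)) • m i
      = (v j * p.eval (v j)) • ∑ i ∈ Finset.univ.filter (fun i => v i = v j), m i := by
    rw [Finset.smul_sum, Finset.sum_filter]
    refine Finset.sum_congr rfl fun i _ => ?_
    split_ifs with hi
    · rw [hi]
    · rw [hpi i hi, mul_zero, zero_smul]
  rw [h2] at h
  exact (smul_eq_zero.mp h).resolve_left (mul_ne_zero hj hpj)
end

section
/- Let m = (m₁,…,m_k) ∈ ℂ^k be such that for every nonempty subset S ⊆ {1,…,k} the sum Σ_{i∈S} mᵢ is nonzero. Then the polynomial ring ℂ[x₁,…,x_k] is a finitely generated module over the ℂ-subalgebra generated by all weighted power sums p_j(m;x) := m₁x₁ʲ + ⋯ + m_k x_kʲ for j ≥ 1. -/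
open MvPolynomial

lemma core_aux {F : Type*} [Field F] {k : ℕ} (a y : Fin k → F)
    (h : ∀ j : ℕ, 1 ≤ j → ∑ i, a i * y i ^ j = 0) [DecidableEq F] :
    ∑ i ∈ Finset.univ.filter (fun i => y i = 1), a i = 0 := by
  have key : ∀ q : Polynomial F, ∑ i, a i * (y i * q.eval (y i)) = 0 := by
    intro q
    induction q using Polynomial.induction_on' with
    | add p q hp hq =>
      simp only [Polynomial.eval_add, mul_add, Finset.sum_add_distrib, hp, hq, add_zero]
    | monomial n c =>
      have := h (n + 1) (by omega)
      calc _ = c * ∑ i, a i * y i ^ (n + 1) := by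
            rw [Finset.mul_sum]
            refine Finset.sum_congr rfl fun i _ => ?_
            rw [Polynomial.eval_monomial]; ring
        _ = 0 := by rw [this, mul_zero]
  let q : Polynomial F := ∏ v ∈ (Finset.univ.image y).erase 1, (Polynomial.X - Polynomial.C v)
  have hq1 : q.eval 1 ≠ 0 := by
    simp only [q, Polynomial.eval_prod, Finset.prod_ne_zero_iff]
    intro v hv
    have := Finset.ne_of_mem_erase hv
    simpa [sub_eq_zero] using this.symm
  have hq : ∀ i, y i ≠ 1 → q.eval (y i) = 0 := by
    intro i hi
    simp only [q, Polynomial.eval_prod]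
    refine Finset.prod_eq_zero (i := y i) (by simp [hi]) (by simp)
  have h1 := key q
  have h2 : (∑ i ∈ Finset.univ.filter (fun i => y i = 1), a i) * q.eval 1 = 0 := by
    rw [← h1, Finset.sum_mul, Finset.sum_filter]
    refine Finset.sum_congr rfl fun i _ => ?_
    split_ifs with hi
    · rw [hi, one_mul]
    · rw [hq i hi]; simp
  exact (mul_eq_zero.mp h2).resolve_right hq1

lemma val_aux {K : Type*} [Field K] [Algebra ℂ K] (V : ValuationSubring K) (k : ℕ) (m : Fin k → ℂ)
    (hm : ∀ S : Finset (Fin k), S.Nonempty → ∑ i ∈ S, m i ≠ 0) (x : Fin k → K)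
    (hC : ∀ c : ℂ, algebraMap ℂ K c ∈ V)
    (hp : ∀ j : ℕ, 1 ≤ j → ∑ i, algebraMap ℂ K (m i) * x i ^ j ∈ V) (i : Fin k) : x i ∈ V := by
  classical
  by_contra hi
  have : Nonempty (Fin k) := ⟨i⟩
  obtain ⟨i0, h0⟩ := Finite.exists_max (fun i => V.valuation (x i))
  have h0V : x i0 ∉ V := by
    rw [← V.valuation_le_one_iff] at hi ⊢
    exact fun h => hi ((h0 i).trans h)
  have hx0 : x i0 ≠ 0 := fun h => h0V (h ▸ V.zero_mem)
  have hv0 : V.valuation (x i0) ≠ 0 := by simpa using hx0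
  have hy : ∀ i, x i / x i0 ∈ V := by
    intro i
    rw [← V.valuation_le_one_iff, map_div₀]
    exact div_le_one_of_le₀ (h0 i) zero_le
  have htV : (x i0)⁻¹ ∈ V := (V.mem_or_inv_mem _).resolve_left h0V
  let t : V := ⟨(x i0)⁻¹, htV⟩
  have ht : IsLocalRing.residue V t = 0 := by
    rw [IsLocalRing.residue_eq_zero_iff, IsLocalRing.mem_maximalIdeal, mem_nonunits_iff]
    intro hu
    obtain ⟨s, hs⟩ := isUnit_iff_exists_inv.mp hu
    have hs' : (x i0)⁻¹ * (s : K) = 1 := congrArg Subtype.val hs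
    have : (s : K) = x i0 := by field_simp at hs'; exact hs'
    exact h0V (this ▸ s.2)
  let φ : ℂ →+* V := (algebraMap ℂ K).codRestrict V.toSubring hC
  let y : Fin k → V := fun i => ⟨x i / x i0, hy i⟩
  let ρ : ℂ →+* IsLocalRing.ResidueField V := (IsLocalRing.residue V).comp φ
  have hsum := core_aux (fun i => ρ (m i)) (fun i => IsLocalRing.residue V (y i)) (by
    intro j hj
    have e : ∑ i, φ (m i) * y i ^ j = ⟨_, hp j hj⟩ * t ^ j := by
      apply Subtype.ext
      change V.subtype (∑ i, φ (m i) * y i ^ j) = V.subtype (⟨_, hp j hj⟩ * t ^ j)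
      rw [map_sum, map_mul, map_pow]
      change ∑ i, V.subtype (φ (m i) * y i ^ j) = (∑ i, algebraMap ℂ K (m i) * x i ^ j) * (x i0)⁻¹ ^ j
      rw [Finset.sum_mul]
      refine Finset.sum_congr rfl fun i _ => ?_
      rw [map_mul, map_pow]
      change algebraMap ℂ K (m i) * (x i / x i0) ^ j = _
      rw [div_eq_mul_inv, mul_pow, mul_assoc]
    have := congrArg (IsLocalRing.residue V) e
    rw [map_mul, map_pow, ht, zero_pow (by omega), mul_zero, map_sum] at this
    simpa [ρ] using this)
  rw [← map_sum, map_eq_zero] at hsum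
  refine hm _ ⟨i0, ?_⟩ hsum
  have : y i0 = 1 := Subtype.ext (div_self hx0)
  simp [this]

theorem stmt_3 (k : ℕ) (m : Fin k → ℂ)
    (hm : ∀ S : Finset (Fin k), S.Nonempty → ∑ i ∈ S, m i ≠ 0) :
    Module.Finite
      (Algebra.adjoin ℂ
        {f : MvPolynomial (Fin k) ℂ |
          ∃ j : ℕ, 1 ≤ j ∧ f = ∑ i : Fin k, C (m i) * X i ^ j})
      (MvPolynomial (Fin k) ℂ) := by
  set A := Algebra.adjoin ℂ
        {f : MvPolynomial (Fin k) ℂ |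
          ∃ j : ℕ, 1 ≤ j ∧ f = ∑ i : Fin k, C (m i) * X i ^ j} with hA
  let P := MvPolynomial (Fin k) ℂ
  let K := FractionRing P
  let R : Subring K := A.toSubring.map (algebraMap P K)
  have hint : ∀ i, IsIntegral A (X i : P) := by
    intro i
    have h1 : algebraMap P K (X i) ∈ (integralClosure (Subring.closure (R : Set K)) K).toSubring := by
      rw [← iInf_valuationSubring_superset, Subring.mem_iInf]
      rintro ⟨V, hV⟩
      refine val_aux V k m hm (fun i => algebraMap P K (X i)) ?_ ?_ i
      · intro c
        refine hV ⟨algebraMap ℂ P c, A.algebraMap_mem c, ?_⟩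
        exact (IsScalarTower.algebraMap_apply ℂ P K c).symm
      · intro j hj
        refine hV ⟨∑ i : Fin k, C (m i) * X i ^ j, Algebra.subset_adjoin ⟨j, hj, rfl⟩, ?_⟩
        simp only [map_sum, map_mul, map_pow]
        refine Finset.sum_congr rfl fun i _ => ?_
        rw [IsScalarTower.algebraMap_apply ℂ P K]; rfl
    rw [Subring.closure_eq] at h1
    obtain ⟨p, hp, hpx⟩ : IsIntegral R (algebraMap P K (X i)) := h1
    let f : A →+* R := ((algebraMap P K).comp A.val.toRingHom).codRestrict R
      (fun a => ⟨a, a.2, rfl⟩)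
    have hf : Function.Surjective f := by
      rintro ⟨_, a, ha, rfl⟩
      exact ⟨⟨a, ha⟩, rfl⟩
    have hl : p ∈ Polynomial.lifts f := by
      rw [Polynomial.mem_lifts]
      exact Polynomial.map_surjective f hf p
    obtain ⟨q, hq, -, hqm⟩ := Polynomial.lifts_and_natDegree_eq_and_monic hl hp
    refine ⟨q, hqm, ?_⟩
    apply IsFractionRing.injective P K
    rw [map_zero, Polynomial.hom_eval₂, ← hpx, ← hq, Polynomial.eval₂_map]
    rfl
  have htop : Algebra.adjoin A (Set.range (X : Fin k → P)) = ⊤ := by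
    rw [eq_top_iff]
    intro f _
    induction f using MvPolynomial.induction_on with
    | C c =>
      exact Subalgebra.algebraMap_mem _ (⟨C c, A.algebraMap_mem c⟩ : A)
    | add p q hp hq => exact add_mem (hp trivial) (hq trivial)
    | mul_X p i hp => exact mul_mem (hp trivial) (Algebra.subset_adjoin ⟨i, rfl⟩)
  have := fg_adjoin_of_finite (R := A) (Set.finite_range (X : Fin k → P))
    (by rintro _ ⟨i, rfl⟩; exact hint i)
  rw [htop] at this
  exact ⟨by simpa using this⟩
end

section
/- Let m̄₁,…,m̄_k be vectors in ℂ^r such that for every nonempty subset S ⊆ {1,…,k} the sum Σ_{i∈S} m̄ᵢ is not the zero vector, and let n ≥ 1. Then the polynomial ring ℂ[x_{i,j} : 1 ≤ i ≤ k, 1 ≤ j ≤ n] is a finitely generated module over the ℂ-subalgebra generated by all weighted monomial power sums Σ_{i=1}^k (m̄ᵢ)_c · x_{i,1}^{s₁}⋯x_{i,n}^{sₙ}, where c ranges over {1,…,r} and s = (s₁,…,sₙ) ranges over ℕⁿ ∖ {0}. -/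
open MvPolynomial

/-- Vandermonde-type separation: if all weighted power sums vanish then so do the weights summed
over each nonzero value. -/
lemma aux_sep {F ι : Type*} [Field F] [Fintype ι] [DecidableEq F] (w y : ι → F)
    (h : ∀ d : ℕ, 1 ≤ d → ∑ i, w i * y i ^ d = 0) (t : F) (ht : t ≠ 0) :
    ∑ i with y i = t, w i = 0 := by
  have hP : ∀ P : Polynomial F, ∑ i, w i * (y i * P.eval (y i)) = 0 := by
    intro P
    induction P using Polynomial.induction_on' with
    | add p q hp hq =>
      simp only [Polynomial.eval_add, mul_add, Finset.sum_add_distrib, hp, hq, add_zero]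
    | monomial e a =>
      have := h (e + 1) (by omega)
      calc ∑ i, w i * (y i * (Polynomial.monomial e a).eval (y i))
          = a * ∑ i, w i * y i ^ (e + 1) := by
            rw [Finset.mul_sum]
            refine Finset.sum_congr rfl fun i _ => ?_
            rw [Polynomial.eval_monomial]; ring
        _ = 0 := by rw [this, mul_zero]
  set P : Polynomial F :=
    ∏ s ∈ (Finset.univ.image y).erase t, (Polynomial.X - Polynomial.C s) with hPdef
  have hPt : P.eval t ≠ 0 := by
    rw [hPdef, Polynomial.eval_prod, Finset.prod_ne_zero_iff]
    intro s hs
    simpa [sub_ne_zero] using (Finset.ne_of_mem_erase hs).symm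
  have hP0 : ∀ i, y i ≠ t → P.eval (y i) = 0 := by
    intro i hi
    rw [hPdef, Polynomial.eval_prod]
    exact Finset.prod_eq_zero (i := y i) (by simp [hi]) (by simp)
  have h1 := hP P
  have h2 : ∑ i, w i * (y i * P.eval (y i)) = (∑ i with y i = t, w i) * (t * P.eval t) := by
    rw [Finset.sum_mul, Finset.sum_filter]
    refine Finset.sum_congr rfl fun i _ => ?_
    split_ifs with hi
    · rw [hi]
    · rw [hP0 i hi]; ring
  rw [h2] at h1
  exact (mul_eq_zero.mp h1).resolve_right (mul_ne_zero ht hPt)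

lemma aux_val {K : Type*} [Field K] (V : ValuationSubring K) (φ : ℂ →+* V) (k r : ℕ)
    (m : Fin k → Fin r → ℂ)
    (hm : ∀ S : Finset (Fin k), S.Nonempty → ∑ i ∈ S, m i ≠ 0) (x : Fin k → K)
    (h : ∀ c d, 1 ≤ d → ∑ i, (φ (m i c) : K) * x i ^ d ∈ V) (i : Fin k) : x i ∈ V := by
  classical
  by_contra hi
  obtain ⟨a, -, ha⟩ := Finset.exists_max_image Finset.univ (fun i => V.valuation (x i))
    ⟨i, Finset.mem_univ i⟩
  have haV : x a ∉ V := fun h => by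
    rw [← V.valuation_le_one_iff] at h hi
    exact hi ((ha i (Finset.mem_univ i)).trans h)
  have ha0 : x a ≠ 0 := fun h => haV (h ▸ V.zero_mem)
  have hinv : (x a)⁻¹ ∈ V.nonunits := V.inv_mem_nonunits_iff.mpr (Or.inr haV)
  have hy : ∀ i, x i * (x a)⁻¹ ∈ V := fun i => by
    rw [← V.valuation_le_one_iff, map_mul, map_inv₀, ← div_eq_mul_inv]
    exact div_le_one_of_le₀ (ha i (Finset.mem_univ i)) zero_le
  let y : Fin k → V := fun i => ⟨x i * (x a)⁻¹, hy i⟩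
  let u : V := ⟨(x a)⁻¹, V.nonunits_subset hinv⟩
  have hu : u ∈ IsLocalRing.maximalIdeal V := V.coe_mem_nonunits_iff.mp hinv
  let π := IsLocalRing.residue V
  have key : ∀ c d, 1 ≤ d → ∑ i, π (φ (m i c)) * π (y i) ^ d = 0 := by
    intro c d hd
    have e : ∑ i, φ (m i c) * y i ^ d = ⟨_, h c d hd⟩ * u ^ d := by
      apply Subtype.ext
      push_cast
      simp only [y, u]
      rw [Finset.sum_mul]
      refine Finset.sum_congr rfl fun i _ => ?_
      rw [mul_pow]; ring
    have := congrArg π e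
    have hu0 : π u = 0 := (IsLocalRing.residue_eq_zero_iff u).mpr hu
    rw [map_mul, map_pow, hu0, zero_pow (by omega), mul_zero, map_sum] at this
    simpa using this
  refine hm (Finset.univ.filter fun i => π (y i) = 1) ⟨a, ?_⟩ ?_
  · have : y a = 1 := Subtype.ext (mul_inv_cancel₀ ha0)
    simp [this]
  · funext c
    have := aux_sep (fun i => π (φ (m i c))) (fun i => π (y i)) (key c) 1 one_ne_zero
    have h2 : (π.comp φ) (∑ i with π (y i) = 1, m i c) = 0 := by
      rw [map_sum]; exact this
    rw [Finset.sum_apply]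
    exact (map_eq_zero _).mp h2

lemma aux_int {A B : Type*} [CommRing A] [CommRing B] [IsDomain B] [Algebra A B] (b : B)
    (h : ∀ V : ValuationSubring (FractionRing B),
      (∀ a : A, algebraMap B (FractionRing B) (algebraMap A B a) ∈ V) →
      algebraMap B (FractionRing B) b ∈ V) : IsIntegral A b := by
  let K := FractionRing B
  let f : A →+* K := algebraMap A K
  have hf : ∀ a, f a = algebraMap B K (algebraMap A B a) :=
    fun a => IsScalarTower.algebraMap_apply A B K a
  have h1 : algebraMap B K b ∈
      (integralClosure (Subring.closure (f.range : Set K)) K).toSubring := by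
    rw [← iInf_valuationSubring_superset, Subring.mem_iInf]
    rintro ⟨V, hV⟩
    exact h V fun a => hV ⟨a, hf a⟩
  rw [Subring.closure_eq] at h1
  have h2 : IsIntegral f.range (algebraMap B K b) := h1
  letI : Algebra A f.range := f.rangeRestrict.toAlgebra
  haveI : IsScalarTower A f.range K := IsScalarTower.of_algebraMap_eq fun a => rfl
  haveI : Algebra.IsIntegral A f.range :=
    Algebra.isIntegral_of_surjective f.rangeRestrict_surjective
  have h3 : IsIntegral A (algebraMap B K b) := isIntegral_trans _ h2
  exact (isIntegral_algebraMap_iff (IsFractionRing.injective B K)).mp h3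

/-- Let `m̄₁,…,m̄_k ∈ ℂ^r` with no nonempty subset summing to zero, and
`n ≥ 1`.  Then `ℂ[x_{i,j} : 1 ≤ i ≤ k, 1 ≤ j ≤ n]` is a finitely generated module over the
`ℂ`-subalgebra generated by all weighted monomial power sums
`Σ_{i=1}^k (m̄ᵢ)_c · x_{i,1}^{s₁}⋯x_{i,n}^{sₙ}` for `c ∈ {1,…,r}` and `s ∈ ℕⁿ ∖ {0}`. -/
theorem stmt_4 (k r n : ℕ) (hn : 1 ≤ n) (m : Fin k → Fin r → ℂ)
    (hm : ∀ S : Finset (Fin k), S.Nonempty → ∑ i ∈ S, m i ≠ 0) :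
    Module.Finite
      (Algebra.adjoin ℂ
        {f : MvPolynomial (Fin k × Fin n) ℂ |
          ∃ (c : Fin r) (s : Fin n → ℕ), s ≠ 0 ∧
            f = ∑ i : Fin k, C (m i c) * ∏ j : Fin n, X (i, j) ^ s j})
      (MvPolynomial (Fin k × Fin n) ℂ) := by
  set A := Algebra.adjoin ℂ
        {f : MvPolynomial (Fin k × Fin n) ℂ |
          ∃ (c : Fin r) (s : Fin n → ℕ), s ≠ 0 ∧
            f = ∑ i : Fin k, C (m i c) * ∏ j : Fin n, X (i, j) ^ s j} with hA
  have hX : ∀ p : Fin k × Fin n, IsIntegral A (X p : MvPolynomial (Fin k × Fin n) ℂ) := by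
    rintro ⟨i, j⟩
    refine aux_int _ fun V hV => ?_
    let K := FractionRing (MvPolynomial (Fin k × Fin n) ℂ)
    let g : MvPolynomial (Fin k × Fin n) ℂ →+* K := algebraMap _ K
    let φ : ℂ →+* V := (g.comp C).codRestrict V.toSubring
      fun z => hV (algebraMap ℂ A z)
    refine aux_val V φ k r m hm (fun i => g (X (i, j))) ?_ i
    intro c d hd
    have hmem : (∑ i : Fin k, C (m i c) * X (i, j) ^ d :
        MvPolynomial (Fin k × Fin n) ℂ) ∈ A := by
      refine Algebra.subset_adjoin ⟨c, Pi.single j d, ?_, ?_⟩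
      · intro h0
        have := congrFun h0 j
        simp at this
        omega
      · refine Finset.sum_congr rfl fun i _ => ?_
        rw [Finset.prod_eq_single j]
        · simp
        · intro b _ hb
          simp [Pi.single_eq_of_ne hb]
        · simp
    have h3 := hV ⟨_, hmem⟩
    have e : g (∑ i : Fin k, C (m i c) * X (i, j) ^ d) =
        ∑ i, (φ (m i c) : K) * g (X (i, j)) ^ d := by
      rw [map_sum]
      refine Finset.sum_congr rfl fun i _ => ?_
      rw [map_mul, map_pow]; rfl
    rw [← e]
    exact h3
  haveI : Algebra.FiniteType A (MvPolynomial (Fin k × Fin n) ℂ) :=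
    Algebra.FiniteType.of_restrictScalars_finiteType ℂ A _
  haveI : Algebra.IsIntegral A (MvPolynomial (Fin k × Fin n) ℂ) := by
    refine ⟨fun p => ?_⟩
    induction p using MvPolynomial.induction_on with
    | C a => exact isIntegral_algebraMap (x := algebraMap ℂ A a)
    | add p q hp hq => exact hp.add hq
    | mul_X p i hp => exact hp.mul (hX i)
  exact Algebra.IsIntegral.finite
end

section
/- Fix m = (m₁,…,m_k) ∈ ℂ^k and set p_j := m₁x₁ʲ + ⋯ + m_k x_kʲ ∈ ℂ[x₁,…,x_k] for j ≥ 1. If for some i ≥ 1 the element p_{i+1} lies in the ℂ-subalgebra of ℂ[x₁,…,x_k] generated by p₁,…,pᵢ, then p_j lies in that same subalgebra for every j ≥ i+1. -/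
open MvPolynomial

/-- The derivation `∑ x_t² ∂_t`. -/
noncomputable def sqDer (k : ℕ) :
    Derivation ℂ (MvPolynomial (Fin k) ℂ) (MvPolynomial (Fin k) ℂ) :=
  mkDerivation ℂ (fun t => X t ^ 2)

theorem sqDer_psum (k : ℕ) (m : Fin k → ℂ) (j : ℕ) (hj : 1 ≤ j) :
    sqDer k (∑ t : Fin k, C (m t) * X t ^ j) =
      (j : ℂ) • ∑ t : Fin k, (C (m t) : MvPolynomial (Fin k) ℂ) * X t ^ (j + 1) := by
  rw [map_sum, Finset.smul_sum]
  refine Finset.sum_congr rfl fun t _ => ?_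
  obtain ⟨n, rfl⟩ : ∃ n, j = n + 1 := ⟨j - 1, by omega⟩
  rw [← smul_eq_C_mul, ← smul_eq_C_mul, Derivation.map_smul, Derivation.leibniz_pow, sqDer,
    mkDerivation_X, Nat.cast_smul_eq_nsmul, smul_comm]
  congr 2
  simp only [Nat.add_sub_cancel, smul_eq_mul]
  ring

theorem stmt_5 (k : ℕ) (m : Fin k → ℂ) (i : ℕ) (hi : 1 ≤ i)
    (h : (∑ t : Fin k, C (m t) * X t ^ (i + 1)) ∈
      Algebra.adjoin ℂ
        ((fun j : ℕ => ∑ t : Fin k, (C (m t) : MvPolynomial (Fin k) ℂ) * X t ^ j) ''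
          Set.Icc 1 i)) :
    ∀ j : ℕ, i + 1 ≤ j →
      (∑ t : Fin k, C (m t) * X t ^ j) ∈
        Algebra.adjoin ℂ
          ((fun j : ℕ => ∑ t : Fin k, (C (m t) : MvPolynomial (Fin k) ℂ) * X t ^ j) ''
            Set.Icc 1 i) := by
  set A := Algebra.adjoin ℂ
    ((fun j : ℕ => ∑ t : Fin k, (C (m t) : MvPolynomial (Fin k) ℂ) * X t ^ j) ''
      Set.Icc 1 i) with hA
  have stable : ∀ f ∈ A, sqDer k f ∈ A := by
    intro f hf
    induction hf using Algebra.adjoin_induction with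
    | mem x hx =>
      obtain ⟨j, ⟨h1, h2⟩, rfl⟩ := hx
      simp only
      rw [sqDer_psum k m j h1]
      refine A.smul_mem ?_ _
      rcases Nat.lt_or_ge j i with h3 | h3
      · exact Algebra.subset_adjoin ⟨j + 1, ⟨by omega, by omega⟩, rfl⟩
      · obtain rfl : j = i := le_antisymm h2 h3
        exact h
    | algebraMap r =>
      rw [Derivation.map_algebraMap]
      exact A.zero_mem
    | add x y hx hy ihx ihy =>
      rw [map_add]
      exact A.add_mem ihx ihy
    | mul x y hx hy ihx ihy =>
      rw [Derivation.leibniz, smul_eq_mul, smul_eq_mul]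
      exact A.add_mem (A.mul_mem hx ihy) (A.mul_mem hy ihx)
  intro j hj
  induction j, hj using Nat.le_induction with
  | base => exact h
  | succ n hn ih =>
    have h1 := stable _ ih
    rw [sqDer_psum k m n (by omega)] at h1
    have h0 : (n : ℂ) ≠ 0 := by
      have : n ≠ 0 := by omega
      exact_mod_cast this
    have h2 := A.smul_mem h1 ((n : ℂ)⁻¹)
    rwa [inv_smul_smul₀ h0] at h2
end

section
/- In the polynomial ring ℂ[m₁,m₂,x₁,x₂], setting p_j := m₁x₁ʲ + m₂x₂ʲ, one has the identity m₁m₂·((m₁+m₂)p₄ − 4p₁p₃ + 3p₂²) = ((m₁+m₂)p₂ − p₁²)². Consequently, for any fixed complex weights m₁, m₂ with m₁, m₂ and m₁+m₂ all nonzero, the weighted power sum p₄ lies in the ℂ-subalgebra of ℂ[x₁,x₂] generated by p₁, p₂, p₃. -/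
open MvPolynomial

/-- The weighted power sum `p_j = m₁x₁ʲ + m₂x₂ʲ` in `ℂ[m₁,m₂,x₁,x₂]`, where
`m_i = X (Sum.inl i)` and `x_i = X (Sum.inr i)`. -/
noncomputable def P7 (j : ℕ) : MvPolynomial (Fin 2 ⊕ Fin 2) ℂ :=
  X (Sum.inl 0) * X (Sum.inr 0) ^ j + X (Sum.inl 1) * X (Sum.inr 1) ^ j

/-- The weighted power sum `p_j(m;x) = m₁x₁ʲ + m₂x₂ʲ ∈ ℂ[x₁,x₂]` for fixed weights. -/
noncomputable def q7 (m₁ m₂ : ℂ) (j : ℕ) : MvPolynomial (Fin 2) ℂ :=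
  C m₁ * X 0 ^ j + C m₂ * X 1 ^ j

/-- In `ℂ[m₁,m₂,x₁,x₂]` one has
`m₁m₂·((m₁+m₂)p₄ − 4p₁p₃ + 3p₂²) = ((m₁+m₂)p₂ − p₁²)²`; consequently, for fixed complex
weights `m₁, m₂` with `m₁, m₂, m₁+m₂` nonzero, `p₄` lies in the `ℂ`-subalgebra of
`ℂ[x₁,x₂]` generated by `p₁, p₂, p₃`. -/
theorem stmt_7 :
    (X (Sum.inl 0) * X (Sum.inl 1) *
        ((X (Sum.inl 0) + X (Sum.inl 1)) * P7 4 - 4 * P7 1 * P7 3 + 3 * P7 2 ^ 2)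
      = ((X (Sum.inl 0) + X (Sum.inl 1)) * P7 2 - P7 1 ^ 2) ^ 2) ∧
    (∀ m₁ m₂ : ℂ, m₁ ≠ 0 → m₂ ≠ 0 → m₁ + m₂ ≠ 0 →
      q7 m₁ m₂ 4 ∈ Algebra.adjoin ℂ {q7 m₁ m₂ 1, q7 m₁ m₂ 2, q7 m₁ m₂ 3}) := by
  refine ⟨by unfold P7; ring, ?_⟩
  intro m₁ m₂ h₁ h₂ h
  have key : q7 m₁ m₂ 4 = (m₁ + m₂)⁻¹ • ((m₁ * m₂)⁻¹ •
      ((m₁ + m₂) • q7 m₁ m₂ 2 - q7 m₁ m₂ 1 ^ 2) ^ 2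
      + (4 : ℂ) • (q7 m₁ m₂ 1 * q7 m₁ m₂ 3) - (3 : ℂ) • q7 m₁ m₂ 2 ^ 2) := by
    have hm : m₁ * m₂ ≠ 0 := mul_ne_zero h₁ h₂
    have e1 : ((m₁ + m₂) • q7 m₁ m₂ 2 - q7 m₁ m₂ 1 ^ 2) ^ 2
        = (m₁ * m₂) • ((m₁ + m₂) • q7 m₁ m₂ 4 - (4 : ℂ) • (q7 m₁ m₂ 1 * q7 m₁ m₂ 3)
          + (3 : ℂ) • q7 m₁ m₂ 2 ^ 2) := by
      have c3 : (C (3 : ℂ) : MvPolynomial (Fin 2) ℂ) = 3 := map_ofNat C 3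
      have c4 : (C (4 : ℂ) : MvPolynomial (Fin 2) ℂ) = 4 := map_ofNat C 4
      simp only [smul_eq_C_mul, q7, C_add, C_mul, c3, c4]
      ring
    rw [e1, inv_smul_smul₀ hm, eq_inv_smul_iff₀ h]
    abel
  rw [key]
  have a1 : q7 m₁ m₂ 1 ∈ Algebra.adjoin ℂ {q7 m₁ m₂ 1, q7 m₁ m₂ 2, q7 m₁ m₂ 3} :=
    Algebra.subset_adjoin (by simp)
  have a2 : q7 m₁ m₂ 2 ∈ Algebra.adjoin ℂ {q7 m₁ m₂ 1, q7 m₁ m₂ 2, q7 m₁ m₂ 3} :=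
    Algebra.subset_adjoin (by simp)
  have a3 : q7 m₁ m₂ 3 ∈ Algebra.adjoin ℂ {q7 m₁ m₂ 1, q7 m₁ m₂ 2, q7 m₁ m₂ 3} :=
    Algebra.subset_adjoin (by simp)
  exact Subalgebra.smul_mem _ (sub_mem (add_mem
    (Subalgebra.smul_mem _ (pow_mem (sub_mem (Subalgebra.smul_mem _ a2 _) (pow_mem a1 2)) 2) _)
    (Subalgebra.smul_mem _ (mul_mem a1 a3) _)) (Subalgebra.smul_mem _ (pow_mem a2 2) _)) _
end

section
/- Let a, b, k be positive integers and let f be a polynomial in the a·b entries of an a×b matrix, with complex coefficients. If f vanishes at every a×b matrix all of whose entries are nonnegative integers and whose rank is at most k, then f vanishes at every a×b complex matrix of rank at most k. Equivalently, the set of matrices with nonnegative integer entries and rank at most k is Zariski-dense in the variety of complex a×b matrices of rank at most k. -/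
theorem exists_rank_factorization {a b : ℕ} (M : Matrix (Fin a) (Fin b) ℂ) :
    ∃ (P : Matrix (Fin a) (Fin M.rank) ℂ) (Q : Matrix (Fin M.rank) (Fin b) ℂ), M = P * Q := by
  let B : Module.Basis (Fin M.rank) ℂ (LinearMap.range M.mulVecLin) :=
    Module.finBasisOfFinrankEq ℂ _ rfl
  let c : Fin b → LinearMap.range M.mulVecLin := fun j =>
    ⟨M.mulVecLin (Pi.single j 1), LinearMap.mem_range_self _ _⟩
  refine ⟨Matrix.of fun i l => (B l : Fin a → ℂ) i, Matrix.of fun l j => B.repr (c j) l, ?_⟩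
  ext i j
  have h := congrArg (fun v : LinearMap.range M.mulVecLin => (v : Fin a → ℂ) i)
    (B.sum_repr (c j))
  have h2 : (c j : Fin a → ℂ) i = M i j := by simp [c]
  simp only [h2] at h
  rw [← h, Matrix.mul_apply, Submodule.coe_sum, Finset.sum_apply]
  refine Finset.sum_congr rfl fun l _ => ?_
  simp only [Submodule.coe_smul, Pi.smul_apply, smul_eq_mul, Matrix.of_apply]
  exact mul_comm _ _

/-- Let `a, b, k` be positive integers and `f` a polynomial in the
entries of an `a×b` matrix.  If `f` vanishes at every matrix with nonnegative integer
entries of rank at most `k`, then `f` vanishes at every complex `a×b` matrix of rank at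
most `k`; i.e. the nonnegative-integer matrices of rank `≤ k` are Zariski-dense in the
rank-`≤ k` matrix variety. -/
theorem stmt_11 (a b k : ℕ) (ha : 0 < a) (hb : 0 < b) (hk : 0 < k)
    (f : MvPolynomial (Fin a × Fin b) ℂ)
    (hvan : ∀ M : Matrix (Fin a) (Fin b) ℂ,
      (∀ i j, ∃ n : ℕ, M i j = n) → M.rank ≤ k →
      MvPolynomial.eval (fun p => M p.1 p.2) f = 0) :
    ∀ M : Matrix (Fin a) (Fin b) ℂ, M.rank ≤ k →
      MvPolynomial.eval (fun p => M p.1 p.2) f = 0 := by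
  intro M hM
  obtain ⟨P, Q, hPQ⟩ := exists_rank_factorization M
  generalize M.rank = r at hM P Q hPQ
  let g : MvPolynomial ((Fin a × Fin r) ⊕ (Fin r × Fin b)) ℂ :=
    MvPolynomial.bind₁ (fun p : Fin a × Fin b =>
      ∑ l, MvPolynomial.X (Sum.inl (p.1, l)) * MvPolynomial.X (Sum.inr (l, p.2))) f
  have hg : ∀ x : (Fin a × Fin r) ⊕ (Fin r × Fin b) → ℂ, MvPolynomial.eval x g =
      MvPolynomial.eval (fun p : Fin a × Fin b =>
        ((Matrix.of fun i l => x (Sum.inl (i, l)) : Matrix (Fin a) (Fin r) ℂ) *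
        (Matrix.of fun l j => x (Sum.inr (l, j)) : Matrix (Fin r) (Fin b) ℂ)) p.1 p.2) f := by
    intro x
    simp only [g, MvPolynomial.eval, MvPolynomial.eval₂Hom_bind₁]
    congr 2
    funext p
    simp [Matrix.mul_apply]
  have hg0 : g = 0 := by
    apply MvPolynomial.funext_set (fun _ => Set.range (Nat.cast : ℕ → ℂ))
      (fun _ => Set.infinite_range_of_injective Nat.cast_injective)
    intro x hx
    rw [hg, map_zero]
    have hx' : ∀ i, ∃ n : ℕ, (n : ℂ) = x i := fun i => hx i (Set.mem_univ i)
    choose n hn using hx'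
    apply hvan
    · intro i j
      refine ⟨∑ l, n (Sum.inl (i, l)) * n (Sum.inr (l, j)), ?_⟩
      simp [Matrix.mul_apply, hn]
    · exact ((Matrix.rank_mul_le_left _ _).trans (Matrix.rank_le_width _)).trans hM
  have := hg (Sum.elim (fun p => P p.1 p.2) (fun p => Q p.1 p.2))
  rw [hg0, map_zero] at this
  rw [hPQ]
  exact this.symm
end

section
/- Let m = (m₁,…,m_k) ∈ ℂ^k and let v = (v₁,…,v_k), v' = (v'₁,…,v'_k) ∈ ℂ^k. Then the following are equivalent: (i) for every integer n ≥ 1, m₁v₁ⁿ + ⋯ + m_k v_kⁿ = m₁v'₁ⁿ + ⋯ + m_k v'_kⁿ; (ii) for every c ∈ ℂ, the sum of those mᵢ with vᵢ = c equals the sum of those mᵢ with v'ᵢ = c. -/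
open scoped Classical

/-- For `m, v, v' ∈ ℂ^k`, the weighted power sums
`Σ mᵢvᵢⁿ` and `Σ mᵢv'ᵢⁿ` agree for all `n ≥ 1` if and only if for every `c ∈ ℂ` the sum
of the `mᵢ` with `vᵢ = c` equals the sum of the `mᵢ` with `v'ᵢ = c`. -/
theorem stmt_12 (k : ℕ) (m v v' : Fin k → ℂ) :
    (∀ n : ℕ, 1 ≤ n → ∑ i : Fin k, m i * v i ^ n = ∑ i : Fin k, m i * v' i ^ n) ↔
    (∀ c : ℂ, ∑ i ∈ Finset.univ.filter (fun i => v i = c), m i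
        = ∑ i ∈ Finset.univ.filter (fun i => v' i = c), m i) := by
  set S : Finset ℂ := Finset.univ.image v ∪ Finset.univ.image v' with hS
  have hv : ∀ i, v i ∈ S := fun i => by simp [hS]
  have hv' : ∀ i, v' i ∈ S := fun i => by simp [hS]
  constructor
  · intro h c
    have hp : ∀ p : Polynomial ℂ, ∑ i, m i * p.eval (v i) = ∑ i, m i * p.eval (v' i) := by
      intro p
      induction p using Polynomial.induction_on' with
      | add p q hp hq => simp only [Polynomial.eval_add, mul_add, Finset.sum_add_distrib, hp, hq]
      | monomial n a =>
        have hn : ∑ i, m i * v i ^ n = ∑ i, m i * v' i ^ n := by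
          rcases Nat.eq_zero_or_pos n with rfl | hn
          · simp
          · exact h n hn
        simp only [Polynomial.eval_monomial, mul_left_comm _ a, ← Finset.mul_sum, hn]
    have key := hp (Lagrange.interpolate S id (fun x => if x = c then 1 else 0))
    have he : ∀ x ∈ S, (Lagrange.interpolate S id (fun x : ℂ => if x = c then (1 : ℂ) else 0)).eval x
        = if x = c then 1 else 0 := fun x hx =>
      Lagrange.eval_interpolate_at_node (v := id) _ (Set.injOn_id _) hx
    simp only [he _ (hv _), he _ (hv' _), mul_ite, mul_one, mul_zero] at key
    rw [Finset.sum_filter, Finset.sum_filter]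
    exact key
  · intro h n _
    have aux : ∀ w : Fin k → ℂ, (∀ i, w i ∈ S) → ∑ i, m i * w i ^ n
        = ∑ c ∈ S, (∑ i ∈ Finset.univ.filter (fun i => w i = c), m i) * c ^ n := by
      intro w hw
      rw [← Finset.sum_fiberwise_of_maps_to (g := w) (t := S) (fun i _ => hw i)]
      refine Finset.sum_congr rfl fun c _ => ?_
      rw [Finset.sum_mul]
      refine Finset.sum_congr rfl fun i hi => ?_
      rw [(Finset.mem_filter.mp hi).2]
    rw [aux v hv, aux v' hv']
    exact Finset.sum_congr rfl fun c _ => by rw [h c]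
end

section
/- Let F₁,…,F_t ∈ ℂ[z] be monic polynomials of positive degree and let n̄₁,…,n̄_t ∈ ℂ^r. Then the following are equivalent: (i) there exist polynomials G₁,…,G_t ∈ ℂ[z], not all zero, with deg Gᵢ < deg Fᵢ for each i, such that Σ_{i=1}^t Gᵢ · (∏_{j≠i} F_j) · n̄ᵢ = 0 in ℂ[z]^r; (ii) there exists α ∈ ℂ such that the family of vectors (n̄ᵢ)_{i : Fᵢ(α)=0}, indexed by those i with Fᵢ(α) = 0, is linearly dependent over ℂ. -/
/-- Let `F₁,…,F_t ∈ ℂ[z]` be monic of positive degree and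
`n̄₁,…,n̄_t ∈ ℂ^r`.  There exist polynomials `G₁,…,G_t`, not all zero, with
`deg Gᵢ < deg Fᵢ` and `Σᵢ Gᵢ·(∏_{j≠i}F_j)·n̄ᵢ = 0` in `ℂ[z]^r` (equivalently
`Σᵢ (Gᵢ/Fᵢ)·n̄ᵢ = 0`), if and only if there is `α ∈ ℂ` such that the family of vectors
`n̄ᵢ` indexed by those `i` with `Fᵢ(α) = 0` is linearly dependent over `ℂ`. -/
theorem stmt_13 (t r : ℕ) (F : Fin t → Polynomial ℂ)
    (hF : ∀ i, (F i).Monic ∧ 0 < (F i).degree)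
    (nbar : Fin t → Fin r → ℂ) :
    (∃ G : Fin t → Polynomial ℂ,
        (∃ i, G i ≠ 0) ∧ (∀ i, (G i).degree < (F i).degree) ∧
        ∀ c : Fin r,
          ∑ i : Fin t, G i * (∏ j ∈ Finset.univ.erase i, F j) * Polynomial.C (nbar i c)
            = 0) ↔
    (∃ α : ℂ,
      ¬ LinearIndependent ℂ (fun i : {i : Fin t // (F i).eval α = 0} => nbar i)) := by
  classical
  constructor
  · rintro ⟨G, ⟨i, hi⟩, hdeg, hrel⟩
    by_contra hcon
    push Not at hcon
    have hFi : F i ≠ 0 := (hF i).1.ne_zero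
    set d := EuclideanDomain.gcd (F i) (G i) with hd
    obtain ⟨Fred, hFred⟩ : d ∣ F i := EuclideanDomain.gcd_dvd_left _ _
    obtain ⟨Gred, hGred⟩ : d ∣ G i := EuclideanDomain.gcd_dvd_right _ _
    have hd0 : d ≠ 0 := by
      intro h
      rw [h, zero_mul] at hFred
      exact hFi hFred
    have hcop : IsCoprime Fred Gred := by
      refine ⟨EuclideanDomain.gcdA (F i) (G i), EuclideanDomain.gcdB (F i) (G i), ?_⟩
      have h := EuclideanDomain.gcd_eq_gcd_ab (F i) (G i)
      rw [← hd] at h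
      apply mul_left_cancel₀ hd0
      calc d * (EuclideanDomain.gcdA (F i) (G i) * Fred + EuclideanDomain.gcdB (F i) (G i) * Gred)
          = (d * Fred) * EuclideanDomain.gcdA (F i) (G i)
            + (d * Gred) * EuclideanDomain.gcdB (F i) (G i) := by ring
        _ = d * 1 := by rw [← hFred, ← hGred, ← h, mul_one]
    have hFreddeg : Fred.degree ≠ 0 := by
      intro h
      have h1 : (F i).degree = d.degree := by rw [hFred, Polynomial.degree_mul, h, add_zero]
      have h2 : d.degree ≤ (G i).degree :=
        Polynomial.degree_le_of_dvd (EuclideanDomain.gcd_dvd_right _ _) hi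
      exact absurd (hdeg i) (not_lt.mpr (h1 ▸ h2))
    obtain ⟨α, hα⟩ := IsAlgClosed.exists_root Fred hFreddeg
    have hiα : (F i).eval α = 0 := by
      rw [hFred, Polynomial.eval_mul, hα, mul_zero]
    have hli := hcon α
    obtain ⟨L, hL⟩ := LinearMap.exists_leftInverse_of_injective 
      (Finsupp.linearCombination ℂ (fun i : {i : Fin t // (F i).eval α = 0} => nbar i))
      (LinearMap.ker_eq_bot.mpr hli)
    obtain ⟨φ, hφ1, hφ0⟩ : ∃ φ : (Fin r → ℂ) →ₗ[ℂ] ℂ, φ (nbar i) = 1 ∧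
        ∀ k, (F k).eval α = 0 → k ≠ i → φ (nbar k) = 0 := by
      have key : ∀ k : {i : Fin t // (F i).eval α = 0},
          L (nbar k) = Finsupp.single k 1 := by
        intro k
        have := LinearMap.congr_fun hL (Finsupp.single k 1)
        simpa using this
      refine ⟨(Finsupp.lapply (⟨i, hiα⟩ : {i : Fin t // (F i).eval α = 0})) ∘ₗ L, ?_, ?_⟩
      · have := key ⟨i, hiα⟩
        simp only at this
        simp [this]
      · intro k hk hki
        have := key ⟨k, hk⟩
        simp only at this
        simp [this, hki]
    have hsum : ∑ k : Fin t, G k * (∏ j ∈ Finset.univ.erase k, F j)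
        * Polynomial.C (φ (nbar k)) = 0 := by
      have h1 : ∀ k, φ (nbar k) = ∑ c, nbar k c * φ (Pi.single c 1) := by
        intro k
        have h2 : nbar k = ∑ c, nbar k c • (Pi.single c 1 : Fin r → ℂ) := by
          ext c
          simp [Finset.sum_apply, Pi.single_apply]
        conv_lhs => rw [h2]
        simp only [map_sum, map_smul, smul_eq_mul]
      calc _ = ∑ k : Fin t, ∑ c, G k * (∏ j ∈ Finset.univ.erase k, F j)
              * Polynomial.C (nbar k c) * Polynomial.C (φ (Pi.single c 1)) := by
            refine Finset.sum_congr rfl fun k _ => ?_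
            rw [h1, map_sum, Finset.mul_sum]
            refine Finset.sum_congr rfl fun c _ => ?_
            rw [Polynomial.C_mul, mul_assoc, mul_assoc, mul_assoc]
        _ = ∑ c, (∑ k : Fin t, G k * (∏ j ∈ Finset.univ.erase k, F j)
              * Polynomial.C (nbar k c)) * Polynomial.C (φ (Pi.single c 1)) := by
            rw [Finset.sum_comm]
            simp only [Finset.sum_mul]
        _ = 0 := by simp [hrel]
    set S := Finset.univ.filter (fun k : Fin t => (F k).eval α = 0) with hS
    set Q := ∏ j ∈ Finset.univ.filter (fun k : Fin t => ¬ (F k).eval α = 0), F j with hQ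
    have hiS : i ∈ S := by simp [hS, hiα]
    set P := ∏ j ∈ S.erase i, F j with hP
    have hPS : F i * P = ∏ j ∈ S, F j := Finset.mul_prod_erase S F hiS
    have hP0 : P ≠ 0 := Finset.prod_ne_zero_iff.mpr fun j _ => (hF j).1.ne_zero
    have hPQ : ∏ j ∈ Finset.univ.erase i, F j = P * Q := by
      apply mul_left_cancel₀ hFi
      rw [Finset.mul_prod_erase _ F (Finset.mem_univ i), ← mul_assoc, hPS]
      exact (Finset.prod_filter_mul_prod_filter_not _ _ _).symm
    have hdvd : F i * P ∣ G i * (P * Q) := by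
      rw [← Finset.add_sum_erase _ _ (Finset.mem_univ i), hφ1, Polynomial.C_1, mul_one,
        hPQ] at hsum
      rw [eq_neg_of_add_eq_zero_left hsum, dvd_neg]
      refine Finset.dvd_sum fun k hk => ?_
      have hki : k ≠ i := Finset.ne_of_mem_erase hk
      by_cases hkα : (F k).eval α = 0
      · simp [hφ0 k hkα hki]
      · rw [hPS]
        apply Dvd.dvd.mul_right
        apply Dvd.dvd.mul_left
        apply Finset.prod_dvd_prod_of_subset
        intro j hj
        refine Finset.mem_erase.mpr ⟨?_, Finset.mem_univ _⟩
        rintro rfl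
        exact hkα (Finset.mem_filter.mp hj).2
    have hdvd2 : F i ∣ G i * Q := by
      have h : F i * P ∣ (G i * Q) * P := by
        convert hdvd using 1
        ring
      exact (mul_dvd_mul_iff_right hP0).mp h
    have hdvd3 : Fred ∣ Gred * Q := by
      rw [hFred, hGred, mul_assoc] at hdvd2
      exact (mul_dvd_mul_iff_left hd0).mp hdvd2
    have hdvd4 : Fred ∣ Q := hcop.dvd_of_dvd_mul_left hdvd3
    have hQα : Q.eval α = 0 := Polynomial.eval_eq_zero_of_dvd_of_eval_eq_zero hdvd4 hα
    rw [hQ, Polynomial.eval_prod, Finset.prod_eq_zero_iff] at hQα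
    obtain ⟨j, hj, hj0⟩ := hQα
    exact (Finset.mem_filter.mp hj).2 hj0
  · rintro ⟨α, hα⟩
    rw [Fintype.not_linearIndependent_iff] at hα
    obtain ⟨g, hg, ⟨i, hi⟩, hgi⟩ := hα
    have hfac : ∀ k : Fin t, (F k).eval α = 0 →
        ∃ H : Polynomial ℂ, F k = (Polynomial.X - Polynomial.C α) * H := by
      intro k hk
      exact Polynomial.dvd_iff_isRoot.mpr hk
    choose! H hH using hfac
    refine ⟨fun k => if h : (F k).eval α = 0 then Polynomial.C (g ⟨k, h⟩) * H k else 0,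
      ⟨i, ?_⟩, ?_, ?_⟩
    · simp only [hi, dif_pos]
      refine mul_ne_zero (Polynomial.C_ne_zero.mpr hgi) ?_
      intro h
      have := hH i hi
      rw [h, mul_zero] at this
      exact (hF i).1.ne_zero this
    · intro k
      by_cases hk : (F k).eval α = 0
      · simp only [hk, dif_pos]
        have hH0 : H k ≠ 0 := by
          intro h
          have := hH k hk
          rw [h, mul_zero] at this
          exact (hF k).1.ne_zero this
        have h1 : (Polynomial.C (g ⟨k, hk⟩) * H k).degree ≤ (H k).degree :=
by
          rw [← Polynomial.smul_eq_C_mul]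
          exact Polynomial.degree_smul_le _ _
        refine lt_of_le_of_lt h1 ?_
        conv_rhs => rw [hH k hk]
        rw [Polynomial.degree_mul, Polynomial.degree_X_sub_C, Polynomial.degree_eq_natDegree hH0]
        norm_cast
        omega
      · simp only [hk, dif_neg, not_false_eq_true, Polynomial.degree_zero]
        exact lt_trans (WithBot.bot_lt_coe 0) (hF k).2
    · intro c
      apply mul_left_cancel₀ (Polynomial.X_sub_C_ne_zero α)
      rw [mul_zero, Finset.mul_sum]
      have hterm : ∀ k : Fin t, (Polynomial.X - Polynomial.C α) *
          ((if h : (F k).eval α = 0 then Polynomial.C (g ⟨k, h⟩) * H k else 0) *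
            (∏ j ∈ Finset.univ.erase k, F j) * Polynomial.C (nbar k c))
          = (∏ j, F j) * Polynomial.C
            (if h : (F k).eval α = 0 then g ⟨k, h⟩ * nbar k c else 0) := by
        intro k
        by_cases hk : (F k).eval α = 0
        · simp only [hk, dif_pos]
          rw [← Finset.mul_prod_erase _ F (Finset.mem_univ k), Polynomial.C_mul]
          generalize g ⟨k, hk⟩ = a
          generalize (∏ j ∈ Finset.univ.erase k, F j) = b
          rw [hH k hk]
          ring
        · simp [hk]
      rw [Finset.sum_congr rfl fun k _ => hterm k, ← Finset.mul_sum, ← map_sum]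
      have hz : ∑ k : Fin t, (if h : (F k).eval α = 0 then g ⟨k, h⟩ * nbar k c else 0) = 0 := by
        have h1 := congrFun hg c
        simp only [Finset.sum_apply, Pi.smul_apply, smul_eq_mul, Pi.zero_apply] at h1
        refine Eq.trans ?_ h1
        rw [Finset.sum_dite]
        simp only [Finset.sum_const_zero, add_zero]
        refine Finset.sum_bij (fun x _ => ⟨x.1, (Finset.mem_filter.mp x.2).2⟩) ?_ ?_ ?_ ?_
        · simp
        · rintro ⟨a, _⟩ _ ⟨b, _⟩ _ h
          simpa using h
        · rintro ⟨b, hb⟩ _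
          exact ⟨⟨b, by simp [hb]⟩, by simp, rfl⟩
        · intros
          rfl
      rw [hz, map_zero, mul_zero]
end

section
/- Let m = (m₁,m₂,m₃) ∈ ℂ³ be such that m₁, m₂, m₃, m₁+m₂, m₁+m₃, m₂+m₃ and m₁+m₂+m₃ are all nonzero, and set p_j := m₁x₁ʲ + m₂x₂ʲ + m₃x₃ʲ ∈ ℂ[x₁,x₂,x₃]. Then for every j ≥ 1, p_j lies in the ℂ-subalgebra of ℂ[x₁,x₂,x₃] generated by p₁, p₂, p₃, p₄, p₅, p₆, p₇. -/
open MvPolynomial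

/-- The key identity between central weighted power sums, on the plane
`a y₁ + b y₂ + c y₃ = 0` parametrized by `y = (c u, c v, -(a u + b v))`. -/
theorem key_identity {R : Type*} [CommRing R] (a b c u v : R)
    (q : ℕ → R) (hq : ∀ j, q j = a * (c * u) ^ j + b * (c * v) ^ j + c * (-(a * u + b * v)) ^ j)
    (s t w : R) (hs : s = a + b + c) (ht : t = a * b + a * c + b * c) (hw : w = a * b * c) :
    s ^ 2 * w * (s * t - w) * q 8 =
      s * w * (4 * s ^ 3 - 12 * s * t + 28 * w) * (q 6 * q 2)
      + 8 * s * w * (s * t - 7 * w) * (q 5 * q 3)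
      + s * (s ^ 2 * t ^ 2 - 3 * s ^ 3 * w - 3 * s * t * w + 35 * w ^ 2) * (q 4 * q 4)
      + (14 * s ^ 3 * w - 2 * s ^ 4 * t - 48 * s * t * w + 6 * s ^ 2 * t ^ 2) * (q 4 * q 2 * q 2)
      + s * w * (32 * t - 12 * s ^ 2) * (q 3 * q 3 * q 2)
      + s * (s ^ 4 + s * w - 6 * s ^ 2 * t + 9 * t ^ 2) * (q 2 * q 2 * q 2 * q 2) := by
  simp only [hq]
  subst hs ht hw
  ring

/-- The right-hand side of the key identity lies in any subring containing the ingredients. -/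
theorem rhs_mem {R : Type*} [CommRing R] (A : Subring R) {a b c q2 q3 q4 q5 q6 : R}
    (ha : a ∈ A) (hb : b ∈ A) (hc : c ∈ A) (h2 : q2 ∈ A) (h3 : q3 ∈ A) (h4 : q4 ∈ A)
    (h5 : q5 ∈ A) (h6 : q6 ∈ A) :
    let s := a + b + c
    let t := a * b + a * c + b * c
    let w := a * b * c
    s * w * (4 * s ^ 3 - 12 * s * t + 28 * w) * (q6 * q2)
      + 8 * s * w * (s * t - 7 * w) * (q5 * q3)
      + s * (s ^ 2 * t ^ 2 - 3 * s ^ 3 * w - 3 * s * t * w + 35 * w ^ 2) * (q4 * q4)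
      + (14 * s ^ 3 * w - 2 * s ^ 4 * t - 48 * s * t * w + 6 * s ^ 2 * t ^ 2) * (q4 * q2 * q2)
      + s * w * (32 * t - 12 * s ^ 2) * (q3 * q3 * q2)
      + s * (s ^ 4 + s * w - 6 * s ^ 2 * t + 9 * t ^ 2) * (q2 * q2 * q2 * q2) ∈ A := by
  intro s t w
  lift a to A using ha
  lift b to A using hb
  lift c to A using hc
  lift q2 to A using h2
  lift q3 to A using h3
  lift q4 to A using h4
  lift q5 to A using h5
  lift q6 to A using h6
  have hs : s ∈ A := (a + b + c).2
  have ht : t ∈ A := (a * b + a * c + b * c).2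
  have hw : w ∈ A := (a * b * c).2
  clear_value s t w
  lift s to A using hs
  lift t to A using ht
  lift w to A using hw
  exact (s * w * (4 * s ^ 3 - 12 * s * t + 28 * w) * (q6 * q2)
      + 8 * s * w * (s * t - 7 * w) * (q5 * q3)
      + s * (s ^ 2 * t ^ 2 - 3 * s ^ 3 * w - 3 * s * t * w + 35 * w ^ 2) * (q4 * q4)
      + (14 * s ^ 3 * w - 2 * s ^ 4 * t - 48 * s * t * w + 6 * s ^ 2 * t ^ 2) * (q4 * q2 * q2)
      + s * w * (32 * t - 12 * s ^ 2) * (q3 * q3 * q2)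
      + s * (s ^ 4 + s * w - 6 * s ^ 2 * t + 9 * t ^ 2) * (q2 * q2 * q2 * q2)).2

set_option maxHeartbeats 1000000 in
theorem stmt_14 (m₁ m₂ m₃ : ℂ) (h₁ : m₁ ≠ 0) (h₂ : m₂ ≠ 0) (h₃ : m₃ ≠ 0)
    (h₁₂ : m₁ + m₂ ≠ 0) (h₁₃ : m₁ + m₃ ≠ 0) (h₂₃ : m₂ + m₃ ≠ 0)
    (h₁₂₃ : m₁ + m₂ + m₃ ≠ 0) :
    ∀ j : ℕ, 1 ≤ j →
      (C m₁ * X 0 ^ j + C m₂ * X 1 ^ j + C m₃ * X 2 ^ j : MvPolynomial (Fin 3) ℂ) ∈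
        Algebra.adjoin ℂ
          ((fun i : ℕ =>
              (C m₁ * X 0 ^ i + C m₂ * X 1 ^ i + C m₃ * X 2 ^ i : MvPolynomial (Fin 3) ℂ)) ''
            Set.Icc 1 7) := by
  set p : ℕ → MvPolynomial (Fin 3) ℂ :=
    fun i : ℕ => C m₁ * X 0 ^ i + C m₂ * X 1 ^ i + C m₃ * X 2 ^ i with hp
  set A := Algebra.adjoin ℂ (p '' Set.Icc 1 7) with hA
  have hC : ∀ z : ℂ, (C z : MvPolynomial (Fin 3) ℂ) ∈ A := fun z => A.algebraMap_mem z
  have hgen : ∀ i, 1 ≤ i → i ≤ 7 → p i ∈ A := fun i hi hi' =>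
    Algebra.subset_adjoin ⟨i, ⟨hi, hi'⟩, rfl⟩
  have hp0 : p 0 ∈ A := by
    have : p 0 = C (m₁ + m₂ + m₃) := by simp [hp]
    rw [this]; exact hC _
  have hlow : ∀ i, i ≤ 7 → p i ∈ A := fun i hi => by
    rcases Nat.eq_zero_or_pos i with rfl | h
    · exact hp0
    · exact hgen i h hi
  -- the centre of mass
  set e : MvPolynomial (Fin 3) ℂ := C (m₁ + m₂ + m₃)⁻¹ * p 1 with he
  have heA : e ∈ A := A.mul_mem (hC _) (hgen 1 le_rfl (by norm_num))
  set q : ℕ → MvPolynomial (Fin 3) ℂ := fun j =>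
    C m₁ * (X 0 - e) ^ j + C m₂ * (X 1 - e) ^ j + C m₃ * (X 2 - e) ^ j with hq
  have hqp : ∀ j, q j = ∑ k ∈ Finset.range (j + 1), p k * ((-e) ^ (j - k) * (j.choose k : ℕ)) := by
    intro j
    simp only [hq, hp, sub_eq_add_neg, add_pow, Finset.mul_sum, ← Finset.sum_add_distrib]
    refine Finset.sum_congr rfl fun k _ => ?_
    ring
  have hcoef : ∀ j k : ℕ, ((-e) ^ (j - k) * (j.choose k : ℕ)) ∈ A := fun j k =>
    A.mul_mem (A.pow_mem (A.neg_mem heA) _) (natCast_mem A _)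
  have hqA : ∀ j, j ≤ 7 → q j ∈ A := by
    intro j hj
    rw [hqp]
    refine A.sum_mem fun k hk => A.mul_mem (hlow k ?_) (hcoef j k)
    have := Finset.mem_range.1 hk
    omega
  have hp8q : p 8 = q 8 - ∑ k ∈ Finset.range 8, p k * ((-e) ^ (8 - k) * ((Nat.choose 8 k : ℕ))) := by
    rw [hqp 8, Finset.sum_range_succ]
    simp
  -- parametrization of the plane
  have hcc : (C m₃ : MvPolynomial (Fin 3) ℂ) * C m₃⁻¹ = 1 := by
    rw [← C_mul, mul_inv_cancel₀ h₃, C_1]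
  have hss : (C (m₁ + m₂ + m₃) : MvPolynomial (Fin 3) ℂ) * C (m₁ + m₂ + m₃)⁻¹ = 1 := by
    rw [← C_mul, mul_inv_cancel₀ h₁₂₃, C_1]
  have hlin : C m₁ * (X 0 - e) + C m₂ * (X 1 - e) + C m₃ * (X 2 - e) = 0 := by
    have h1 : C (m₁ + m₂ + m₃) * e = p 1 := by
      rw [he, ← mul_assoc, hss, one_mul]
    simp only [C_add, hp, pow_one] at h1
    linear_combination -h1
  have hx0 : X 0 - e = C m₃ * (C m₃⁻¹ * (X 0 - e)) := by rw [← mul_assoc, hcc, one_mul]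
  have hx1 : X 1 - e = C m₃ * (C m₃⁻¹ * (X 1 - e)) := by rw [← mul_assoc, hcc, one_mul]
  have hx2 : X 2 - e = -(C m₁ * (C m₃⁻¹ * (X 0 - e)) + C m₂ * (C m₃⁻¹ * (X 1 - e))) := by
    linear_combination C m₃⁻¹ * hlin - (X 2 - e) * hcc
  have hkey := key_identity (C m₁) (C m₂) (C m₃) (C m₃⁻¹ * (X 0 - e)) (C m₃⁻¹ * (X 1 - e)) q
    (fun j => by rw [← hx0, ← hx1, ← hx2]) _ _ _ rfl rfl rfl
  have hq8 : q 8 ∈ A := by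
    set δ : ℂ := (m₁ + m₂ + m₃) ^ 2 * (m₁ * m₂ * m₃) *
      ((m₁ + m₂ + m₃) * (m₁ * m₂ + m₁ * m₃ + m₂ * m₃) - m₁ * m₂ * m₃) with hδ
    have hδ0 : δ ≠ 0 := by
      have : δ = (m₁ + m₂ + m₃) ^ 2 * (m₁ * m₂ * m₃) *
          ((m₁ + m₂) * (m₁ + m₃) * (m₂ + m₃)) := by rw [hδ]; ring
      rw [this]; positivity
    have hqe : q 8 = C δ⁻¹ * (C δ * q 8) := by
      rw [← mul_assoc, ← C_mul, inv_mul_cancel₀ hδ0, C_1, one_mul]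
    rw [hqe]
    refine A.mul_mem (hC _) ?_
    have hδC : (C δ : MvPolynomial (Fin 3) ℂ) = (C m₁ + C m₂ + C m₃) ^ 2 *
        (C m₁ * C m₂ * C m₃) * ((C m₁ + C m₂ + C m₃) *
        (C m₁ * C m₂ + C m₁ * C m₃ + C m₂ * C m₃) - C m₁ * C m₂ * C m₃) := by
      simp only [hδ, C_mul, C_add, C_sub, C_pow]
    rw [hδC, hkey]
    have hq2 := hqA 2 (by norm_num)
    have hq3 := hqA 3 (by norm_num)
    have hq4 := hqA 4 (by norm_num)
    have hq5 := hqA 5 (by norm_num)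
    have hq6 := hqA 6 (by norm_num)
    have hm1 := hC m₁
    have hm2 := hC m₂
    have hm3 := hC m₃
    exact rhs_mem A.toSubring hm1 hm2 hm3 hq2 hq3 hq4 hq5 hq6
  have hp8 : p 8 ∈ A := by
    rw [hp8q]
    refine A.sub_mem hq8 (A.sum_mem fun k hk => A.mul_mem (hlow k ?_) (hcoef 8 k))
    have := Finset.mem_range.1 hk
    omega
  -- the derivation `∑ xᵢ² ∂ᵢ`
  let D : Derivation ℂ (MvPolynomial (Fin 3) ℂ) (MvPolynomial (Fin 3) ℂ) :=
    mkDerivation ℂ (fun i => X i ^ 2)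
  have hDX : ∀ i, D (X i) = X i ^ 2 := fun i => mkDerivation_X _ _ i
  have hDC : ∀ z : ℂ, D (C z) = 0 := fun z => D.map_algebraMap z
  have hDp : ∀ j, D (p (j + 1)) = C ((j : ℂ) + 1) * p (j + 2) := by
    intro j
    simp only [hp, map_add, Derivation.leibniz, Derivation.leibniz_pow, hDX, hDC, smul_eq_mul,
      nsmul_eq_mul, Nat.add_sub_cancel, map_natCast, map_one]
    push_cast
    ring
  have hDA : ∀ f ∈ A, D f ∈ A := by
    intro f hf
    rw [hA] at hf
    induction hf using Algebra.adjoin_induction with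
    | mem x hx =>
      obtain ⟨i, ⟨hi1, hi7⟩, rfl⟩ := hx
      obtain ⟨k, rfl⟩ : ∃ k, i = k + 1 := ⟨i - 1, by omega⟩
      rw [hDp]
      refine A.mul_mem (hC _) ?_
      rcases Nat.lt_or_ge k 6 with h | h
      · exact hlow _ (by omega)
      · obtain rfl : k = 6 := by omega
        exact hp8
    | algebraMap r => rw [D.map_algebraMap]; exact A.zero_mem
    | add x y _ _ hx hy => rw [map_add]; exact A.add_mem hx hy
    | mul x y hx' hy' hx hy =>
      rw [D.leibniz]
      exact A.add_mem (A.mul_mem hx' hy) (A.mul_mem hy' hx)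
  intro j hj
  change p j ∈ A
  induction j, hj using Nat.le_induction with
  | base => exact hlow 1 (by norm_num)
  | succ n hn ih =>
    obtain ⟨k, rfl⟩ : ∃ k, n = k + 1 := ⟨n - 1, by omega⟩
    have hk : ((k : ℂ) + 1) ≠ 0 := Nat.cast_add_one_ne_zero k
    have : p (k + 1 + 1) = C ((k : ℂ) + 1)⁻¹ * D (p (k + 1)) := by
      rw [hDp, ← mul_assoc, ← C_mul, inv_mul_cancel₀ hk, C_1, one_mul]
    rw [this]
    exact A.mul_mem (hC _) (hDA _ ih)
end

section
/- The polynomial x⁷ + 2y⁷ + 4z⁷ does not lie in the ℂ-subalgebra of ℂ[x,y,z] generated by the six polynomials xⁱ + 2yⁱ + 4zⁱ for 1 ≤ i ≤ 6. -/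
open MvPolynomial

/-- The weighted power sum `xⁱ + 2yⁱ + 4zⁱ`. -/
noncomputable def wps (i : ℕ) : MvPolynomial (Fin 3) ℂ :=
  X 0 ^ i + 2 * X 1 ^ i + 4 * X 2 ^ i

/-- A combination of point evaluations; it kills all degree-7 products of `wps 1, …, wps 6`. -/
noncomputable def evFun : MvPolynomial (Fin 3) ℂ →ₗ[ℂ] ℂ :=
  (-12225 : ℂ) • (aeval ![(0 : ℂ), 0, 1]).toLinearMap
  + (-9150 : ℂ) • (aeval ![(0 : ℂ), 1, 0]).toLinearMap
  + (5700 : ℂ) • (aeval ![(1 : ℂ), 0, 0]).toLinearMap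
  + (300 : ℂ) • (aeval ![(0 : ℂ), 1, -1]).toLinearMap
  + (-650 : ℂ) • (aeval ![(0 : ℂ), 1, 1]).toLinearMap
  + (3900 : ℂ) • (aeval ![(1 : ℂ), -1, 0]).toLinearMap
  + (-1500 : ℂ) • (aeval ![(1 : ℂ), 0, -1]).toLinearMap
  + (4632 : ℂ) • (aeval ![(1 : ℂ), 0, 1]).toLinearMap
  + (14800 : ℂ) • (aeval ![(1 : ℂ), 1, 0]).toLinearMap
  + (180 : ℂ) • (aeval ![(1 : ℂ), -1, -1]).toLinearMap

lemma wps_hom (i : ℕ) : (wps i).IsHomogeneous i := by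
  have h (j : Fin 3) : (X j ^ i : MvPolynomial (Fin 3) ℂ).IsHomogeneous i := by
    simpa using (isHomogeneous_X ℂ j).pow i
  have h2 : (2 * X 1 ^ i : MvPolynomial (Fin 3) ℂ).IsHomogeneous i := (h 1).C_mul 2
  have h4 : (4 * X 2 ^ i : MvPolynomial (Fin 3) ℂ).IsHomogeneous i := (h 2).C_mul 4
  exact ((h 0).add h2).add h4

/-- A monomial in `wps 1, …, wps 6`. -/
noncomputable def wmon (a b c d e f : ℕ) : MvPolynomial (Fin 3) ℂ :=
  wps 1 ^ a * wps 2 ^ b * wps 3 ^ c * wps 4 ^ d * wps 5 ^ e * wps 6 ^ f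

lemma wmon_hom (a b c d e f : ℕ) :
    (wmon a b c d e f).IsHomogeneous (1 * a + 2 * b + 3 * c + 4 * d + 5 * e + 6 * f) :=
  ((((((wps_hom 1).pow a).mul ((wps_hom 2).pow b)).mul ((wps_hom 3).pow c)).mul
    ((wps_hom 4).pow d)).mul ((wps_hom 5).pow e)).mul ((wps_hom 6).pow f)

lemma evFun_wmon (a b c d e f : ℕ) (h : 1 * a + 2 * b + 3 * c + 4 * d + 5 * e + 6 * f = 7) :
    evFun (wmon a b c d e f) = 0 := by
  have hf : f ≤ 1 := by omega
  have he : e ≤ 1 := by omega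
  have hd : d ≤ 1 := by omega
  have hc : c ≤ 2 := by omega
  have hb : b ≤ 3 := by omega
  obtain rfl : a = 7 - (2 * b + 3 * c + 4 * d + 5 * e + 6 * f) := by omega
  interval_cases f <;> interval_cases e <;> interval_cases d <;> interval_cases c <;>
    interval_cases b <;> first | (exfalso; omega) | (simp [evFun, wmon, wps]; try norm_num)

lemma evFun_seven : evFun (wps 7) ≠ 0 := by
  simp [evFun, wps]; norm_num

lemma comp_wmon (a b c d e f : ℕ) :
    evFun (homogeneousComponent 7 (wmon a b c d e f)) = 0 := by
  rw [homogeneousComponent_of_mem (wmon_hom a b c d e f)]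
  split_ifs with h
  · exact evFun_wmon a b c d e f h.symm
  · simp

lemma closure_wmon (p : MvPolynomial (Fin 3) ℂ)
    (hp : p ∈ Submonoid.closure (wps '' Set.Icc 1 6)) :
    ∃ a b c d e f, p = wmon a b c d e f := by
  induction hp using Submonoid.closure_induction with
  | mem x hx =>
    obtain ⟨i, ⟨h1, h6⟩, rfl⟩ := hx
    interval_cases i
    · exact ⟨1, 0, 0, 0, 0, 0, by simp [wmon]⟩
    · exact ⟨0, 1, 0, 0, 0, 0, by simp [wmon]⟩
    · exact ⟨0, 0, 1, 0, 0, 0, by simp [wmon]⟩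
    · exact ⟨0, 0, 0, 1, 0, 0, by simp [wmon]⟩
    · exact ⟨0, 0, 0, 0, 1, 0, by simp [wmon]⟩
    · exact ⟨0, 0, 0, 0, 0, 1, by simp [wmon]⟩
  | one => exact ⟨0, 0, 0, 0, 0, 0, by simp [wmon]⟩
  | mul x y _ _ hx hy =>
    obtain ⟨a, b, c, d, e, f, rfl⟩ := hx
    obtain ⟨a', b', c', d', e', f', rfl⟩ := hy
    exact ⟨a + a', b + b', c + c', d + d', e + e', f + f', by simp only [wmon]; ring⟩

/-- The polynomial `x⁷ + 2y⁷ + 4z⁷` does not lie in the `ℂ`-subalgebra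
of `ℂ[x,y,z]` generated by the six polynomials `xⁱ + 2yⁱ + 4zⁱ`, `1 ≤ i ≤ 6`. -/
theorem stmt_15 :
    (X 0 ^ 7 + 2 * X 1 ^ 7 + 4 * X 2 ^ 7 : MvPolynomial (Fin 3) ℂ) ∉
      Algebra.adjoin ℂ
        ((fun i : ℕ =>
            (X 0 ^ i + 2 * X 1 ^ i + 4 * X 2 ^ i : MvPolynomial (Fin 3) ℂ)) ''
          Set.Icc 1 6) := by
  intro hmem
  change wps 7 ∈ Algebra.adjoin ℂ (wps '' Set.Icc 1 6) at hmem
  rw [← Subalgebra.mem_toSubmodule, Algebra.adjoin_eq_span] at hmem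
  have hle : Submodule.span ℂ (Submonoid.closure (wps '' Set.Icc 1 6) :
      Set (MvPolynomial (Fin 3) ℂ)) ≤ LinearMap.ker (evFun ∘ₗ homogeneousComponent 7) := by
    rw [Submodule.span_le]
    intro p hp
    obtain ⟨a, b, c, d, e, f, rfl⟩ := closure_wmon p hp
    exact comp_wmon a b c d e f
  have h0 : evFun (homogeneousComponent 7 (wps 7)) = 0 := hle hmem
  rw [homogeneousComponent_of_mem (wps_hom 7), if_pos rfl] at h0
  exact evFun_seven h0
end

section
/- The polynomial x¹⁵ + 2y¹⁵ + 4z¹⁵ + 8w¹⁵ does not lie in the ℂ-subalgebra of ℂ[x,y,z,w] generated by the fourteen polynomials xⁱ + 2yⁱ + 4zⁱ + 8wⁱ for 1 ≤ i ≤ 14. -/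
open MvPolynomial

/-- Integer points of the hyperplane `x + 2y + 4z + 8w = 0`, given by their `y, z, w`. -/
abbrev Pt : Type := ℤ × ℤ × ℤ

/-- The weighted power sum of degree `i` at the point with coordinates `q`. -/
def pw (i : ℕ) (q : Pt) : ℤ :=
  (-2 * q.1 - 4 * q.2.1 - 8 * q.2.2) ^ i + 2 * q.1 ^ i + 4 * q.2.1 ^ i + 8 * q.2.2 ^ i

/-- Points with coefficients: the functional is the combination of the evaluations. -/
def data : List (ℤ × Pt) := [
(2445487242939163283169257778625470592762245490397698560534789815085430330036360516950347089441966157631243826358689922916000, -1, 0, 0),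
  (-303728973923991223789390886848986431311179709138322823375947629630104020920301907479070215440675208282805883797561762609000, 0, -1, 0),
  (1558585771315366639014086193204520743946297456063420981574676464757240011477580819177761295735542484657762909569563753800, 0, 0, -1),
  (16330558672084272521530534669561728948357965230492053463489058629908181004390080196505799111331105444886289327504542346200, -1, -1, 0),
  (2366948696581961977386118809046317255058518151235394735380093786595900653808512206868442167545336201305451399408504925160, -1, 0, -1),
  (-4734995270559648301212415328678188576342764026377532928065881316245954345390287029711565898389460362082555333137862055400, -1, 0, 1),
  (-176229821380986437565594372445801208026547172104978272953881038682958796102916418110068442280593260265969999877036100783800, -1, 1, 0),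
  (1236051396416754168446776414013852428386046614719715947135262278474182398266321506316469144131613325347115341202596186000, 0, -1, -1),
  (-33494528594408108648729661869327621345932373431923526014167021942664601763643842468925492773605022861473273002702757446000, 0, -1, 1),
  (120328280542677607968249120131557132705574290208017215956793594355157942266681020148153891017932435810496724489774997280, -2, -1, 0),
  (-50474761630603251357820918295501589723941855570689407610901145200883750371768713649299723264585202312893667588095402200, -2, 0, -1),
  (295302986648350973828257864396685219110224698526560357916840459017415098706456041195096033456401839959003417089434758400, -2, 0, 1),
  (269301794630605582861647461409710130606272212471602773832494183380193468171932401268826439865904973246519648516217013400, -2, 1, 0),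
  (-8502069299542838678219629447767143926201172507047323247171859611655887737844260971142943376472595825920783289615882200, -1, -2, 0),
  (169924304616099417989984224502254217718231267162473538249554984126296456697653326663092333484722598949936796860254655435, -1, -1, -1),
  (-40760016824665300072854951963714953776404164497596134374828778141856872383045353553394893006529980462756417258010342010975, -1, -1, 1),
  (101360324168678283630306383435131544466755113443960166480056224187208215103484530664622607886193787825985328068458800, -1, 0, -2),
  (-183378559398562882312816942425882960337217627623673992658272436261668850372560497042959344300226453045880568215454800, -1, 0, 2),
  (-810907088090573056708609329994092337986490399453636667649898074539230055434674138101155575173846407317784058315693443065, -1, 1, -1),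
  (42606290741697903671256661707258162897128542327966456419456550429381732677788665396714476918719753072377850288173738125, -1, 1, 1),
  (-23963248911058906511322232785420209064172742022998321524878033727362725939950334534197789427024192560880744836155915240, -1, 2, 0),
  (12147292601431611900712255531560192808817084842061632350713849562980368261218614991372590200363784647606375976878594200, 0, -2, -1),
  (201737195180045913040299394409392222445340094141072260252354839091965225019553196230019295375428855764066882373179263600, 0, -2, 1),
  (-1160637143874940698507974099144016865450636483094247040207199599333428082139714743523189873142522395433422641281710400, 0, -1, -2),
  (1209104407850683315258231425823487780078004617269477743170273684709873954823294409502835543721825443198539959593153800, 0, -1, 2),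
  (8062058800717808228648115947875787158351783020173310354130458897529793974084334669913736881734952964093895154977853000, -2, -1, -1),
  (5696967715838374615791982819739566386208978750996610782475776497138646463082773037896169104333366612576910081639523653600, -2, -1, 1),
  (607559356522323415882559755975955358876812064755714263625107321158304260963454213565273164500283609965557158267630800, -2, 1, -1),
  (-3117464709279251467031563463643868650842123344644669669540288903341810157665645621445827528989601909178323804663049000, -2, 1, 1),
  (-4693540385513997717176422931887402479116509778060532729286581575420374868104365398729154647433064156489184589210163890, -1, -2, -1),
  (772479025685920216104225259971160004587410778990568377565717791839690379239346730383931476770635674749521145768637462650, -1, -2, 1),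
  (1895187983344912899624784499301539610317761748338849767040713481729042350357079541405054779559258283456167546480413350, -1, -1, -2),
  (-1557750940639228956683910692580766622654813386970424275947278443984936665402717440900606290862776405118814847866710750, -1, -1, 2),
  (121119013856067067044007230461416104277010517050202832549521543719367240694311952834557923534591306078316222324534450, -1, 1, -2),
  (-68532887076281509048533857088854283274796782580973107194022026678354524007658720974218666564194779421593018047116250, -1, 1, 2),
  (93045861810035287794370711695486153587417757900265103081788678000751943862145744407988000974385672467181452240704452138, -1, 2, -1),
  (967016763304151847643187707542313552753749212886133961051064417599166560749167873204228199041421428473896577999331150, -1, 2, 1),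
  (-1969496441315083982299142929362657961131263441185848803857775618423454525194690331240329049259615208678688575022478800, -2, -2, -1),
  (-8519136360622141735656283328168170055990691781603916537308787311748845189838015445969641709358571699640979487376306600, -2, -2, 1),
  (-389398566543914422626023587849468525415673312592644606397550081961155809816292297666848998655670654129993589633451296, -2, -1, -2),
  (1966812394352388296981440509450503168660344900509883005330482510562208730161736886529182674151633061857015016454746200, -2, -1, 2)
  ]

/-- Check that all products of power sums of total degree `r`, with nonincreasing parts
in `2..m`, are killed by the functional `v`. -/
def go : ℕ → ℕ → ℕ → List (ℤ × Pt) → Bool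
  | 0, _, _, _ => false
  | f + 1, m, r, v => (r != 0 || (v.map fun d => d.1).sum == 0) &&
      (List.range (m - 1)).all fun j => decide (r < j + 2) ||
        go f (j + 2) (r - (j + 2)) (v.map fun d => (d.1 * pw (j + 2) d.2, d.2))

theorem go_sound (l : List ℕ) : ∀ (f m r : ℕ) (v : List (ℤ × Pt)), go f m r v = true →
    (∀ i ∈ l, 2 ≤ i ∧ i ≤ m) → l.Pairwise (fun a b => b ≤ a) → l.sum = r →
    (v.map fun d => d.1 * (l.map fun i => pw i d.2).prod).sum = 0 := by
  induction l with
  | nil =>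
    intro f m r v h _ _ hr
    cases f with
    | zero => simp [go] at h
    | succ f =>
      simp only [List.sum_nil] at hr
      subst hr
      simp only [go, Bool.and_eq_true] at h
      simpa using h.1
  | cons i l ih =>
    intro f m r v h hl hp hr
    cases f with
    | zero => simp [go] at h
    | succ f =>
      simp only [go, Bool.and_eq_true, List.all_eq_true, List.mem_range, Bool.or_eq_true,
        decide_eq_true_eq] at h
      have hi := hl i (by simp)
      rw [List.pairwise_cons] at hp
      simp only [List.sum_cons] at hr
      rcases h.2 (i - 2) (by omega) with h2 | h2
      · omega
      · rw [Nat.sub_add_cancel hi.1] at h2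
        have := ih f i (r - i) _ h2 (fun k hk => ⟨(hl k (by simp [hk])).1, hp.1 k hk⟩) hp.2
          (by omega)
        simpa [List.map_map, Function.comp_def, mul_assoc] using this

set_option maxRecDepth 100000 in
theorem go_data : go 9 14 15 data = true := by
  decide +kernel

set_option maxRecDepth 100000 in
theorem data_ne : (data.map fun d => d.1 * pw 15 d.2).sum ≠ 0 := by
  decide +kernel

theorem kill (l : List ℕ) (hl : ∀ i ∈ l, 1 ≤ i ∧ i ≤ 14) (hs : l.sum = 15) :
    (data.map fun d => d.1 * (l.map fun i => pw i d.2).prod).sum = 0 := by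
  by_cases h1 : 1 ∈ l
  · apply List.sum_eq_zero
    intro x hx
    obtain ⟨d, _, rfl⟩ := List.mem_map.1 hx
    have : (l.map fun i => pw i d.2).prod = 0 := by
      apply List.prod_eq_zero
      refine List.mem_map.2 ⟨1, h1, ?_⟩
      simp only [pw, pow_one]
      ring
    rw [this, mul_zero]
  · have hperm := List.perm_insertionSort (fun a b : ℕ => b ≤ a) l
    have key := go_sound (l.insertionSort fun a b => b ≤ a) 9 14 15 data go_data
      (fun i hi => by
        have hi' := hperm.mem_iff.1 hi
        have h2 := hl i hi'
        have : i ≠ 1 := fun h => h1 (h ▸ hi')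
        omega)
      (List.pairwise_insertionSort (fun a b : ℕ => b ≤ a) l) (hperm.sum_eq.trans hs)
    rw [← key]
    congr 1
    refine List.map_congr_left fun d _ => ?_
    rw [(hperm.map fun i => pw i d.2).prod_eq]

/-- Restriction to the line through the point `q`. -/
noncomputable def ev (q : Pt) : MvPolynomial (Fin 4) ℂ →ₐ[ℂ] Polynomial ℂ :=
  aeval ![Polynomial.C ((-2 * q.1 - 4 * q.2.1 - 8 * q.2.2 : ℤ) : ℂ) * Polynomial.X,
    Polynomial.C (q.1 : ℂ) * Polynomial.X, Polynomial.C (q.2.1 : ℂ) * Polynomial.X,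
    Polynomial.C (q.2.2 : ℂ) * Polynomial.X]

/-- The weighted power sums. -/
noncomputable def ps (i : ℕ) : MvPolynomial (Fin 4) ℂ :=
  X 0 ^ i + 2 * X 1 ^ i + 4 * X 2 ^ i + 8 * X 3 ^ i

theorem ev_ps (q : Pt) (i : ℕ) :
    ev q (ps i) = Polynomial.C (pw i q : ℂ) * Polynomial.X ^ i := by
  have h2 : ev q 2 = 2 := map_ofNat _ 2
  have h4 : ev q 4 = 4 := map_ofNat _ 4
  have h8 : ev q 8 = 8 := map_ofNat _ 8
  have c2 : (Polynomial.C (2 : ℂ)) = 2 := map_ofNat _ 2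
  have c4 : (Polynomial.C (4 : ℂ)) = 4 := map_ofNat _ 4
  have c8 : (Polynomial.C (8 : ℂ)) = 8 := map_ofNat _ 8
  simp only [ps, map_add, map_mul, map_pow, h2, h4, h8]
  simp only [ev, aeval_X, pw, Int.cast_add, Int.cast_mul, Int.cast_pow, Polynomial.C_add,
    Polynomial.C_mul, Polynomial.C_pow, Int.cast_ofNat, c2, c4, c8]
  simp [mul_pow]
  ring

theorem ev_prod (q : Pt) (l : List ℕ) :
    ev q (l.map ps).prod =
      Polynomial.C (((l.map fun i => pw i q).prod : ℤ) : ℂ) * Polynomial.X ^ l.sum := by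
  induction l with
  | nil => simp
  | cons i l ih =>
    simp only [List.map_cons, List.prod_cons, map_mul, ih, ev_ps, Int.cast_mul, List.sum_cons,
      pow_add]
    ring

/-- The separating functional. -/
noncomputable def Phi (F : MvPolynomial (Fin 4) ℂ) : ℂ :=
  (data.map fun d => (d.1 : ℂ) * (ev d.2 F).coeff 15).sum

theorem Phi_add (F G : MvPolynomial (Fin 4) ℂ) : Phi (F + G) = Phi F + Phi G := by
  simp only [Phi, map_add, Polynomial.coeff_add, mul_add]
  exact List.sum_map_add

theorem Phi_smul (c : ℂ) (F : MvPolynomial (Fin 4) ℂ) : Phi (c • F) = c * Phi F := by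
  simp only [Phi, map_smul, Polynomial.coeff_smul, smul_eq_mul, mul_left_comm _ c]
  exact List.sum_map_mul_left ..

theorem cast_sum (l : List ℤ) : ((l.sum : ℤ) : ℂ) = (l.map fun x : ℤ => (x : ℂ)).sum := by
  induction l with
  | nil => simp
  | cons a l ih => simp [ih]

theorem Phi_prod (l : List ℕ) (hs : l.sum = 15) : Phi (l.map ps).prod =
    (((data.map fun d => d.1 * (l.map fun i => pw i d.2).prod).sum : ℤ) : ℂ) := by
  rw [cast_sum, List.map_map]
  simp only [Phi, ev_prod, hs, Polynomial.coeff_C_mul_X_pow, if_true, Function.comp_def,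
    Int.cast_mul]

theorem Phi_prod_ne (l : List ℕ) (hs : l.sum ≠ 15) : Phi (l.map ps).prod = 0 := by
  simp only [Phi, ev_prod, Polynomial.coeff_C_mul_X_pow, if_neg (Ne.symm hs), mul_zero]
  apply List.sum_eq_zero
  simp

theorem exists_list (F : MvPolynomial (Fin 4) ℂ)
    (hF : F ∈ Submonoid.closure (ps '' Set.Icc 1 14)) :
    ∃ l : List ℕ, (∀ i ∈ l, 1 ≤ i ∧ i ≤ 14) ∧ F = (l.map ps).prod := by
  induction hF using Submonoid.closure_induction with
  | mem x hx =>
    obtain ⟨i, hi, rfl⟩ := hx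
    exact ⟨[i], by simpa using hi, by simp⟩
  | one => exact ⟨[], by simp, by simp⟩
  | mul x y _ _ hx hy =>
    obtain ⟨l, hl, rfl⟩ := hx
    obtain ⟨m, hm, rfl⟩ := hy
    refine ⟨l ++ m, ?_, by simp⟩
    intro i hi
    rcases List.mem_append.1 hi with h | h
    · exact hl i h
    · exact hm i h

theorem Phi_adjoin (F : MvPolynomial (Fin 4) ℂ)
    (hF : F ∈ Algebra.adjoin ℂ (ps '' Set.Icc 1 14)) : Phi F = 0 := by
  rw [← Subalgebra.mem_toSubmodule, Algebra.adjoin_eq_span] at hF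
  induction hF using Submodule.span_induction with
  | mem x hx =>
    obtain ⟨l, hl, rfl⟩ := exists_list x hx
    by_cases hs : l.sum = 15
    · rw [Phi_prod l hs, kill l hl hs, Int.cast_zero]
    · exact Phi_prod_ne l hs
  | zero => simpa using Phi_smul 0 0
  | add x y _ _ hx hy => rw [Phi_add, hx, hy, add_zero]
  | smul c x _ hx => rw [Phi_smul, hx, mul_zero]

/-- The polynomial `x¹⁵ + 2y¹⁵ + 4z¹⁵ + 8w¹⁵` does not lie in the
`ℂ`-subalgebra of `ℂ[x,y,z,w]` generated by the fourteen polynomials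
`xⁱ + 2yⁱ + 4zⁱ + 8wⁱ`, `1 ≤ i ≤ 14`. -/
theorem stmt_16 :
    (X 0 ^ 15 + 2 * X 1 ^ 15 + 4 * X 2 ^ 15 + 8 * X 3 ^ 15 : MvPolynomial (Fin 4) ℂ) ∉
      Algebra.adjoin ℂ
        ((fun i : ℕ =>
            (X 0 ^ i + 2 * X 1 ^ i + 4 * X 2 ^ i + 8 * X 3 ^ i : MvPolynomial (Fin 4) ℂ)) ''
          Set.Icc 1 14) := by
  intro h
  have h0 : Phi (ps 15) = 0 := Phi_adjoin _ h
  have h1 := Phi_prod [15] (by simp)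
  simp only [List.map_cons, List.map_nil, List.prod_cons, List.prod_nil, mul_one] at h1
  rw [h0] at h1
  exact data_ne (by exact_mod_cast h1.symm)
end

section
/- Let m = (m₁,m₂) ∈ ℂ² with m₁, m₂ and m₁+m₂ all nonzero, and set p_j := m₁x₁ʲ + m₂x₂ʲ ∈ ℂ[x₁,x₂]. Then for every j ≥ 1, p_j lies in the ℂ-subalgebra of ℂ[x₁,x₂] generated by p₁, p₂, p₃. -/
open MvPolynomial

/-- Let `m = (m₁,m₂) ∈ ℂ²` with `m₁, m₂, m₁+m₂` all nonzero, and set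
`p_j := m₁x₁ʲ + m₂x₂ʲ`.  Then for every `j ≥ 1`, `p_j` lies in the `ℂ`-subalgebra of
`ℂ[x₁,x₂]` generated by `p₁, p₂, p₃`. -/
theorem stmt_17 (m₁ m₂ : ℂ) (h₁ : m₁ ≠ 0) (h₂ : m₂ ≠ 0) (h₁₂ : m₁ + m₂ ≠ 0) :
    ∀ j : ℕ, 1 ≤ j →
      (C m₁ * X 0 ^ j + C m₂ * X 1 ^ j : MvPolynomial (Fin 2) ℂ) ∈
        Algebra.adjoin ℂ
          ((fun i : ℕ =>
              (C m₁ * X 0 ^ i + C m₂ * X 1 ^ i : MvPolynomial (Fin 2) ℂ)) ''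
            Set.Icc 1 3) := by
  intro j _
  set A := Algebra.adjoin ℂ
          ((fun i : ℕ =>
              (C m₁ * X 0 ^ i + C m₂ * X 1 ^ i : MvPolynomial (Fin 2) ℂ)) ''
            Set.Icc 1 3) with hA
  have hp : ∀ i : ℕ, 1 ≤ i → i ≤ 3 →
      (C m₁ * X 0 ^ i + C m₂ * X 1 ^ i : MvPolynomial (Fin 2) ℂ) ∈ A :=
    fun i hi hi' => Algebra.subset_adjoin ⟨i, ⟨hi, hi'⟩, rfl⟩
  have hC : ∀ c : ℂ, (C c : MvPolynomial (Fin 2) ℂ) ∈ A := fun c => A.algebraMap_mem c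
  obtain ⟨a, ha⟩ : ∃ a : MvPolynomial (Fin 2) ℂ,
    a = C (m₁ + m₂)⁻¹ * (C m₁ * X 0 + C m₂ * X 1) := ⟨_, rfl⟩
  obtain ⟨d, hd⟩ : ∃ d : MvPolynomial (Fin 2) ℂ,
    d = C (m₁ + m₂)⁻¹ * (X 0 - X 1) := ⟨_, rfl⟩
  have hu : (C (m₁ + m₂)⁻¹ * (C m₁ + C m₂) : MvPolynomial (Fin 2) ℂ) = 1 := by
    rw [← C_add, ← C_mul, inv_mul_cancel₀ h₁₂, C_1]
  have hx0 : (X 0 : MvPolynomial (Fin 2) ℂ) = C m₂ * d + a := by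
    rw [ha, hd]; linear_combination (-X 0) * hu
  have hx1 : (X 1 : MvPolynomial (Fin 2) ℂ) = C (-m₁) * d + a := by
    rw [ha, hd, C_neg]; linear_combination (-X 1) * hu
  have haA : a ∈ A := by
    rw [ha]
    have := hp 1 (by norm_num) (by norm_num)
    simp only [pow_one] at this
    exact A.mul_mem (hC _) this
  have hcancel : ∀ (c : ℂ) (y : MvPolynomial (Fin 2) ℂ), c ≠ 0 → C c * y ∈ A → y ∈ A := by
    intro c y hc h
    have := A.mul_mem (hC c⁻¹) h
    rwa [← mul_assoc, ← C_mul, inv_mul_cancel₀ hc, C_1, one_mul] at this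
  have hd2 : d ^ 2 ∈ A := by
    apply hcancel (m₁ * m₂ * (m₁ + m₂)) _ (by positivity)
    have e : C (m₁ * m₂ * (m₁ + m₂)) * d ^ 2 =
        (C m₁ * X 0 ^ 2 + C m₂ * X 1 ^ 2) - C (m₁ + m₂) * a ^ 2 := by
      rw [hx0, hx1]; simp only [C_mul, C_add, C_neg]; ring
    rw [e]
    exact A.sub_mem (hp 2 (by norm_num) (by norm_num)) (A.mul_mem (hC _) (A.pow_mem haA 2))
  have hk : ∀ k : ℕ, C (m₁ * m₂ ^ k + m₂ * (-m₁) ^ k) * d ^ k ∈ A := by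
    intro k
    by_cases hm : m₁ = m₂
    · rcases Nat.even_or_odd' k with ⟨l, rfl | rfl⟩
      · rw [pow_mul d]
        exact A.mul_mem (hC _) (A.pow_mem hd2 l)
      · have : m₁ * m₂ ^ (2 * l + 1) + m₂ * (-m₁) ^ (2 * l + 1) = 0 := by
          rw [hm, Odd.neg_pow ⟨l, rfl⟩]; ring
        rw [this, C_0, zero_mul]; exact A.zero_mem
    · have hd3 : d ^ 3 ∈ A := by
        apply hcancel (m₁ * m₂ * (m₁ + m₂) * (m₂ - m₁)) _
          (mul_ne_zero (by positivity) (sub_ne_zero.2 (Ne.symm hm)))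
        have e : C (m₁ * m₂ * (m₁ + m₂) * (m₂ - m₁)) * d ^ 3 =
            (C m₁ * X 0 ^ 3 + C m₂ * X 1 ^ 3) - C (m₁ + m₂) * a ^ 3
              - C (3 * (m₁ * m₂ * (m₁ + m₂))) * (a * d ^ 2) := by
          have h3 : (C 3 : MvPolynomial (Fin 2) ℂ) = 3 := map_ofNat C 3
          rw [hx0, hx1]; simp only [C_mul, C_add, C_neg, C_sub, h3]; ring
        rw [e]
        exact A.sub_mem (A.sub_mem (hp 3 (by norm_num) (by norm_num))
          (A.mul_mem (hC _) (A.pow_mem haA 3))) (A.mul_mem (hC _) (A.mul_mem haA hd2))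
      rcases Nat.even_or_odd' k with ⟨l, rfl | rfl⟩
      · rw [pow_mul d]
        exact A.mul_mem (hC _) (A.pow_mem hd2 l)
      · rcases l with _ | l
        · have : m₁ * m₂ ^ (2 * 0 + 1) + m₂ * (-m₁) ^ (2 * 0 + 1) = 0 := by ring
          rw [this, C_0, zero_mul]; exact A.zero_mem
        · have : d ^ (2 * (l + 1) + 1) = (d ^ 2) ^ l * d ^ 3 := by ring
          rw [this]
          exact A.mul_mem (hC _) (A.mul_mem (A.pow_mem hd2 l) hd3)
  have e : (C m₁ * X 0 ^ j + C m₂ * X 1 ^ j : MvPolynomial (Fin 2) ℂ) =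
      ∑ k ∈ Finset.range (j + 1), (C (m₁ * m₂ ^ k + m₂ * (-m₁) ^ k) * d ^ k) *
        (a ^ (j - k) * (j.choose k : MvPolynomial (Fin 2) ℂ)) := by
    rw [hx0, hx1, add_pow, add_pow, Finset.mul_sum, Finset.mul_sum, ← Finset.sum_add_distrib]
    refine Finset.sum_congr rfl fun k _ => ?_
    rw [C_add, C_mul, C_mul, C_pow, C_pow, mul_pow, mul_pow]
    ring
  rw [e]
  exact A.sum_mem fun k _ => A.mul_mem (hk k) (A.mul_mem (A.pow_mem haA _) (A.natCast_mem _))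
end

section
/- Let m₁, m₂ ∈ ℂ with m₁, m₂ and m₁+m₂ all nonzero. Then the ℂ-subalgebra of ℂ[x₁,x₂] generated by all weighted power sums p_j := m₁x₁ʲ + m₂x₂ʲ for j ≥ 1 equals the ℂ-subalgebra generated by the three elements m₁x₁ + m₂x₂, (x₁ − x₂)², and (m₁ − m₂)(x₁ − x₂)³. -/
open MvPolynomial

/-- Let `m₁, m₂ ∈ ℂ` with `m₁, m₂, m₁+m₂` all nonzero.  Then the
`ℂ`-subalgebra of `ℂ[x₁,x₂]` generated by all weighted power sums
`p_j := m₁x₁ʲ + m₂x₂ʲ` (`j ≥ 1`) equals the `ℂ`-subalgebra generated by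
`m₁x₁ + m₂x₂`, `(x₁ − x₂)²`, and `(m₁ − m₂)(x₁ − x₂)³`. -/
theorem stmt_18 (m₁ m₂ : ℂ) (h₁ : m₁ ≠ 0) (h₂ : m₂ ≠ 0) (h₁₂ : m₁ + m₂ ≠ 0) :
    Algebra.adjoin ℂ
        {f : MvPolynomial (Fin 2) ℂ |
          ∃ j : ℕ, 1 ≤ j ∧ f = C m₁ * X 0 ^ j + C m₂ * X 1 ^ j}
      = Algebra.adjoin ℂ
          ({C m₁ * X 0 + C m₂ * X 1, (X 0 - X 1) ^ 2,
            C (m₁ - m₂) * (X 0 - X 1) ^ 3} : Set (MvPolynomial (Fin 2) ℂ)) := by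
  have hC : ∀ (S : Subalgebra ℂ (MvPolynomial (Fin 2) ℂ)) (a : ℂ), C a ∈ S :=
    fun S a => S.algebraMap_mem a
  have hinv : ∀ (S : Subalgebra ℂ (MvPolynomial (Fin 2) ℂ)) (a : ℂ)
      (f : MvPolynomial (Fin 2) ℂ), a ≠ 0 → C a * f ∈ S → f ∈ S := by
    intro S a f ha hf
    have h := S.mul_mem (hC S a⁻¹) hf
    rwa [← mul_assoc, ← C_mul, inv_mul_cancel₀ ha, C_1, one_mul] at h
  apply le_antisymm
  · apply Algebra.adjoin_le
    rintro f ⟨j, -, rfl⟩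
    set A := Algebra.adjoin ℂ
          ({C m₁ * X 0 + C m₂ * X 1, (X 0 - X 1) ^ 2,
            C (m₁ - m₂) * (X 0 - X 1) ^ 3} : Set (MvPolynomial (Fin 2) ℂ)) with hA
    have hL : C m₁ * X 0 + C m₂ * X 1 ∈ A := Algebra.subset_adjoin (by simp)
    have hd2 : ((X 0 - X 1) ^ 2 : MvPolynomial (Fin 2) ℂ) ∈ A :=
      Algebra.subset_adjoin (by simp)
    have hd3 : (C (m₁ - m₂) * (X 0 - X 1) ^ 3 : MvPolynomial (Fin 2) ℂ) ∈ A :=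
      Algebra.subset_adjoin (by simp)
    have key : ∀ k : ℕ, (C (m₁ * m₂ ^ k + m₂ * (-m₁) ^ k) * (X 0 - X 1) ^ k :
        MvPolynomial (Fin 2) ℂ) ∈ A := by
      intro k
      rcases Nat.even_or_odd' k with ⟨n, rfl | rfl⟩
      · rw [pow_mul (X 0 - X 1 : MvPolynomial (Fin 2) ℂ)]
        exact A.mul_mem (hC A _) (A.pow_mem hd2 n)
      · rcases n with _ | n
        · have : m₁ * m₂ ^ (2 * 0 + 1) + m₂ * (-m₁) ^ (2 * 0 + 1) = 0 := by ring
          rw [this, C_0, zero_mul]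
          exact A.zero_mem
        · by_cases h : m₁ = m₂
          · have : m₁ * m₂ ^ (2 * (n + 1) + 1) + m₂ * (-m₁) ^ (2 * (n + 1) + 1) = 0 := by
              subst h
              rw [Odd.neg_pow ⟨n + 1, rfl⟩]
              ring
            rw [this, C_0, zero_mul]
            exact A.zero_mem
          · have h' : m₁ - m₂ ≠ 0 := sub_ne_zero.mpr h
            apply hinv A _ _ h'
            have := A.mul_mem (hC A (m₁ * m₂ ^ (2 * (n + 1) + 1) +
              m₂ * (-m₁) ^ (2 * (n + 1) + 1))) (A.mul_mem hd3 (A.pow_mem hd2 n))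
            convert this using 1
            generalize (X 0 - X 1 : MvPolynomial (Fin 2) ℂ) = d
            ring
    apply hinv A ((m₁ + m₂) ^ j) _ (pow_ne_zero _ h₁₂)
    have e : (C ((m₁ + m₂) ^ j) * (C m₁ * X 0 ^ j + C m₂ * X 1 ^ j) :
        MvPolynomial (Fin 2) ℂ) = ∑ k ∈ Finset.range (j + 1),
          (C m₁ * X 0 + C m₂ * X 1) ^ (j - k) * (j.choose k : MvPolynomial (Fin 2) ℂ) *
          (C (m₁ * m₂ ^ k + m₂ * (-m₁) ^ k) * (X 0 - X 1) ^ k) := by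
      have e1 : (C ((m₁ + m₂) ^ j) * (C m₁ * X 0 ^ j + C m₂ * X 1 ^ j) :
          MvPolynomial (Fin 2) ℂ) =
          C m₁ * (C m₂ * (X 0 - X 1) + (C m₁ * X 0 + C m₂ * X 1)) ^ j +
          C m₂ * (-C m₁ * (X 0 - X 1) + (C m₁ * X 0 + C m₂ * X 1)) ^ j := by
        have a1 : (C m₂ * (X 0 - X 1) + (C m₁ * X 0 + C m₂ * X 1) :
            MvPolynomial (Fin 2) ℂ) = (C m₁ + C m₂) * X 0 := by ring
        have a2 : (-C m₁ * (X 0 - X 1) + (C m₁ * X 0 + C m₂ * X 1) :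
            MvPolynomial (Fin 2) ℂ) = (C m₁ + C m₂) * X 1 := by ring
        rw [a1, a2, mul_pow, mul_pow, C_pow, C_add]
        ring
      rw [e1, add_pow, add_pow, Finset.mul_sum, Finset.mul_sum, ← Finset.sum_add_distrib]
      refine Finset.sum_congr rfl fun k _ => ?_
      simp only [C_add, C_mul, C_pow, C_neg, mul_pow]
      ring
    rw [e]
    exact A.sum_mem fun k _ => A.mul_mem (A.mul_mem (A.pow_mem hL _) (natCast_mem A _)) (key k)
  · apply Algebra.adjoin_le
    set B := Algebra.adjoin ℂ
        {f : MvPolynomial (Fin 2) ℂ |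
          ∃ j : ℕ, 1 ≤ j ∧ f = C m₁ * X 0 ^ j + C m₂ * X 1 ^ j} with hB
    have hp : ∀ j : ℕ, 1 ≤ j →
        (C m₁ * X 0 ^ j + C m₂ * X 1 ^ j : MvPolynomial (Fin 2) ℂ) ∈ B :=
      fun j hj => Algebra.subset_adjoin ⟨j, hj, rfl⟩
    have hL : (C m₁ * X 0 + C m₂ * X 1 : MvPolynomial (Fin 2) ℂ) ∈ B := by
      simpa using hp 1 le_rfl
    have hm : m₁ * m₂ ≠ 0 := mul_ne_zero h₁ h₂
    have hd2 : ((X 0 - X 1) ^ 2 : MvPolynomial (Fin 2) ℂ) ∈ B := by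
      apply hinv B (m₁ * m₂) _ hm
      have := B.sub_mem (B.mul_mem (hC B (m₁ + m₂)) (hp 2 (by norm_num))) (B.pow_mem hL 2)
      convert this using 1
      simp only [C_add, C_mul]
      ring
    have hd3 : (C (m₁ - m₂) * (X 0 - X 1) ^ 3 : MvPolynomial (Fin 2) ℂ) ∈ B := by
      apply hinv B (m₁ * m₂) _ hm
      have := B.sub_mem (B.add_mem (B.pow_mem hL 3)
        (B.mul_mem (hC B (3 * (m₁ * m₂))) (B.mul_mem hL hd2)))
        (B.mul_mem (hC B ((m₁ + m₂) ^ 2)) (hp 3 (by norm_num)))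
      convert this using 1
      have h3 : (C 3 : MvPolynomial (Fin 2) ℂ) = 3 := map_ofNat C 3
      simp only [C_add, C_mul, C_sub, C_pow, h3]
      ring
    rintro f (rfl | rfl | rfl)
    · exact hL
    · exact hd2
    · exact hd3
end
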